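/- arXiv:2006.08930 — 5 statements merged into one kernel-verified Lean document; each statement's English description precedes it below -/
import Mathlib

section
/- For every r with 0 ≤ r ≤ 1/3: ∑_{n=0}^∞ |a_n| r^n + (1/(1+|a_0|) + r/(1-r)) · ∑_{n=1}^∞ |a_n|² r^{2n} + (8/9) · ∑_{n=1}^∞ n |a_n|² r^{2n} ≤ 1. -/
/-!
Multiplication by the power series `F = ∑ aₙ Xⁿ` of a function bounded by `1` contracts the `ℓ²`
norm of coefficients, by Parseval's identity on circles of radius `ρ < 1`. Applied to
`1 + X ^ m * H`, with the coefficients of `H` conjugate to those of `F` up to phase and weights, the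
contraction property yields
`|a₂ₙ₊₁| ≤ 1 - ∑_{k ≤ n} |aₖ|²` and
`|a₂ₙ₊₂| ≤ 1 - ∑_{k ≤ n} |aₖ|² - |aₙ₊₁|² / (1 + |a₀|)`.
Multiplying these by the matching powers of `r` and telescoping bounds the first two sums by
`|a₀| + (1 - |a₀|²) r / (1 - r)`. In the area sum, `|aₙ| ≤ 1 - |a₀|²` gives the bound
`(1 - |a₀|²)² r² / (1 - r²)²`; for `r ≤ 1/3` the factor `r² / (1 - r²)²` is at most `9/64`, and
`8/9 * 9/64 = 1/8` is just small enough to close the estimate.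
-/

open Filter Finset PowerSeries
open scoped Topology ComplexConjugate

section CircleBound

theorem circleAverage_sq_norm_eval_eq_sum_range {p : Polynomial ℂ} {N : ℕ} (hp : p.degree < N) :
    Real.circleAverage (fun z ↦ ‖p.eval z‖ ^ 2) 0 1 = ∑ k ∈ range N, ‖p.coeff k‖ ^ 2 := by
  rw [← p.sum_sq_norm_coeff_eq_circleAverage]
  refine sum_subset (fun k hk ↦ mem_range.2 ?_) fun k _ hk ↦ ?_
  · exact_mod_cast (Polynomial.le_degree_of_mem_supp k hk).trans_lt hp
  · simpa using hk

theorem sum_range_sq_norm_coeff_le_circleAverage (p : Polynomial ℂ) (N : ℕ) :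
    ∑ k ∈ range N, ‖p.coeff k‖ ^ 2 ≤ Real.circleAverage (fun z ↦ ‖p.eval z‖ ^ 2) 0 1 := by
  have degree_lt : p.degree < (max N (p.natDegree + 1) : ℕ) :=
    Polynomial.degree_lt_iff_coeff_zero _ _ |>.2 fun k hk ↦
      Polynomial.coeff_eq_zero_of_natDegree_lt (le_of_max_le_right hk)
  rw [circleAverage_sq_norm_eval_eq_sum_range degree_lt]
  exact sum_le_sum_of_subset_of_nonneg (range_mono (le_max_left _ _)) fun _ _ _ ↦ sq_nonneg _

theorem circleAverage_sq_norm_eval_mul_le (p q : Polynomial ℂ) {C : ℝ}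
    (hq : ∀ z : ℂ, ‖z‖ = 1 → ‖q.eval z‖ ≤ C) :
    Real.circleAverage (fun z ↦ ‖(p * q).eval z‖ ^ 2) 0 1 ≤
      C ^ 2 * Real.circleAverage (fun z ↦ ‖p.eval z‖ ^ 2) 0 1 := by
  rw [← smul_eq_mul (C ^ 2), ← Real.circleAverage_fun_smul]
  refine Real.circleAverage_mono (Continuous.continuousOn (by fun_prop)).circleIntegrable'
    (Continuous.continuousOn (by fun_prop)).circleIntegrable' fun z hz ↦ ?_
  have hz1 : ‖z‖ = 1 := by simpa using hz
  rw [Polynomial.eval_mul, norm_mul, mul_pow, smul_eq_mul, mul_comm]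
  gcongr
  exact hq z hz1

theorem norm_eval_trunc_le {𝕜 : Type*} [NormedField 𝕜] [CompleteSpace 𝕜] {F : 𝕜⟦X⟧}
    (hF : Summable fun n ↦ ‖coeff n F‖) {z : 𝕜} (hz : ‖z‖ = 1) (N : ℕ) :
    ‖(trunc N F).eval z‖ ≤ ‖∑' n, coeff n F * z ^ n‖ + ∑' n, ‖coeff (n + N) F‖ := by
  have norm_term (n : ℕ) : ‖coeff n F * z ^ n‖ = ‖coeff n F‖ := by simp [hz]
  have summable_terms : Summable fun n ↦ ‖coeff n F * z ^ n‖ := by simpa only [norm_term] using hF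
  have summable_tail : Summable fun n ↦ ‖coeff (n + N) F * z ^ (n + N)‖ :=
    summable_terms.comp_injective (add_left_injective N)
  have tail_le : ‖∑' n, coeff (n + N) F * z ^ (n + N)‖ ≤ ∑' n, ‖coeff (n + N) F‖ := by
    simpa only [norm_term] using norm_tsum_le_tsum_norm summable_tail
  have eval_eq : (trunc N F).eval z =
      ∑' n, coeff n F * z ^ n - ∑' n, coeff (n + N) F * z ^ (n + N) := by
    rw [← summable_terms.of_norm.sum_add_tsum_nat_add N, add_sub_cancel_right]
    exact eval₂_trunc_eq_sum_range z (RingHom.id 𝕜) N F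
  rw [eval_eq]
  exact (norm_sub_le _ _).trans (by gcongr)

end CircleBound

/-- Multiplication by `F` contracts the `ℓ²` norm of every initial segment of coefficients; that is,
the finite lower triangular Toeplitz matrices with the coefficients of `F` are contractions. This is
how the bound `‖f‖ ≤ 1` on the unit disk is used. Truncations keep the definition free of
summability conditions. -/
def IsMulContractive {R : Type*} [SeminormedRing R] (F : R⟦X⟧) : Prop :=
  ∀ (G : R⟦X⟧) (N : ℕ), ∑ k ∈ range N, ‖coeff k (G * F)‖ ^ 2 ≤ ∑ k ∈ range N, ‖coeff k G‖ ^ 2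

theorem isMulContractive_of_norm_tsum_le_one {F : ℂ⟦X⟧} (hF : Summable fun n ↦ ‖coeff n F‖)
    (hF1 : ∀ z : ℂ, ‖z‖ = 1 → ‖∑' n, coeff n F * z ^ n‖ ≤ 1) : IsMulContractive F := by
  intro G N
  let tail (M : ℕ) : ℝ := ∑' n, ‖coeff (n + M) F‖
  have tendsto_bound : Tendsto (fun M ↦ (1 + tail M) ^ 2 * ∑ k ∈ range N, ‖coeff k G‖ ^ 2) atTop
      (𝓝 (∑ k ∈ range N, ‖coeff k G‖ ^ 2)) := by
    have tendsto_tail : Tendsto tail atTop (𝓝 0) := tendsto_sum_nat_add fun n ↦ ‖coeff n F‖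
    simpa using ((tendsto_tail.const_add 1).pow 2).mul_const (∑ k ∈ range N, ‖coeff k G‖ ^ 2)
  refine ge_of_tendsto tendsto_bound ((eventually_ge_atTop N).mono fun M hM ↦ ?_)
  have trunc_le (z : ℂ) (hz : ‖z‖ = 1) : ‖(trunc M F).eval z‖ ≤ 1 + tail M :=
    (norm_eval_trunc_le hF hz M).trans (by gcongr; exact hF1 z hz)
  calc ∑ k ∈ range N, ‖coeff k (G * F)‖ ^ 2
      = ∑ k ∈ range N, ‖(trunc N G * trunc M F).coeff k‖ ^ 2 := by
        refine sum_congr rfl fun k hk ↦ ?_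
        have hkN := mem_range.1 hk
        rw [coeff_mul_eq_coeff_trunc_mul_trunc₂ G F hkN (hkN.trans_le hM),
          ← Polynomial.coe_mul, Polynomial.coeff_coe]
    _ ≤ Real.circleAverage (fun z ↦ ‖(trunc N G * trunc M F).eval z‖ ^ 2) 0 1 :=
        sum_range_sq_norm_coeff_le_circleAverage _ N
    _ ≤ (1 + tail M) ^ 2 * Real.circleAverage (fun z ↦ ‖(trunc N G).eval z‖ ^ 2) 0 1 :=
        circleAverage_sq_norm_eval_mul_le _ _ trunc_le
    _ = (1 + tail M) ^ 2 * ∑ k ∈ range N, ‖coeff k G‖ ^ 2 := by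
        rw [circleAverage_sq_norm_eval_eq_sum_range (degree_trunc_lt G N)]
        congr 1
        exact sum_congr rfl fun k hk ↦ by rw [coeff_trunc, if_pos (mem_range.1 hk)]

theorem isMulContractive_of_rescale {𝕜 : Type*} [RCLike 𝕜] {F : 𝕜⟦X⟧}
    (h : ∀ ρ : ℝ, 0 < ρ → ρ < 1 → IsMulContractive (rescale (ρ : 𝕜) F)) : IsMulContractive F := by
  intro G N
  let partialSum (ρ : ℝ) : ℝ := ∑ k ∈ range N, ‖coeff k (G * rescale (ρ : 𝕜) F)‖ ^ 2
  have continuous_partialSum : Continuous partialSum := by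
    simp only [partialSum, coeff_mul, coeff_rescale]
    fun_prop
  have tendsto_partialSum : Tendsto partialSum (𝓝[<] 1)
      (𝓝 (∑ k ∈ range N, ‖coeff k (G * F)‖ ^ 2)) := by
    simpa [partialSum] using (continuous_partialSum.tendsto 1).mono_left nhdsWithin_le_nhds
  refine le_of_tendsto tendsto_partialSum ?_
  filter_upwards [Ioo_mem_nhdsLT zero_lt_one] with ρ hρ using h ρ hρ.1 hρ.2 G N

theorem isMulContractive_mk_of_norm_le_one {f : ℂ → ℂ} {a : ℕ → ℂ}
    (hf : ∀ z ∈ Metric.ball (0 : ℂ) 1, ‖f z‖ ≤ 1)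
    (ha : ∀ z ∈ Metric.ball (0 : ℂ) 1, HasSum (fun n ↦ a n * z ^ n) (f z)) :
    IsMulContractive (mk a) := by
  refine isMulContractive_of_rescale fun ρ hρ0 hρ1 ↦ ?_
  have mem_ball {z : ℂ} (hz : ‖z‖ = 1) : (ρ : ℂ) * z ∈ Metric.ball (0 : ℂ) 1 := by
    simpa [hz, abs_of_pos hρ0] using hρ1
  have term_eq (z : ℂ) (n : ℕ) :
      coeff n (rescale (ρ : ℂ) (mk a)) * z ^ n = a n * (ρ * z) ^ n := by
    rw [coeff_rescale, coeff_mk]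
    ring
  refine isMulContractive_of_norm_tsum_le_one ?_ fun z hz ↦ ?_
  · simpa [coeff_rescale, mul_comm] using (ha _ (mem_ball norm_one)).summable.norm
  · simp only [Complex.coe_algebraMap, term_eq, (ha _ (mem_ball hz)).tsum_eq]
    exact hf _ (mem_ball hz)

section Coefficients

variable {𝕜 : Type*} [RCLike 𝕜] {F : 𝕜⟦X⟧}

theorem IsMulContractive.sum_sq_norm_coeff_le_one (hF : IsMulContractive F) (N : ℕ) :
    ∑ k ∈ range N, ‖coeff k F‖ ^ 2 ≤ 1 := by
  have sum_one : ∑ k ∈ range N, ‖coeff k (1 : 𝕜⟦X⟧)‖ ^ 2 ≤ 1 := by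
    simp only [coeff_one, apply_ite norm, norm_one, norm_zero, ite_pow, one_pow,
      zero_pow two_ne_zero, sum_ite_eq']
    split_ifs <;> norm_num
  simpa only [one_mul] using (hF 1 N).trans sum_one

theorem IsMulContractive.norm_coeff_le_one (hF : IsMulContractive F) (n : ℕ) :
    ‖coeff n F‖ ≤ 1 := by
  rw [← sq_le_one_iff₀ (norm_nonneg _)]
  exact (single_le_sum (f := fun k ↦ ‖coeff k F‖ ^ 2) (fun _ _ ↦ sq_nonneg _)
    (self_mem_range_succ n)).trans (hF.sum_sq_norm_coeff_le_one (n + 1))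

theorem IsMulContractive.sum_sq_norm_coeff_add_le (hF : IsMulContractive F) (H : 𝕜⟦X⟧) {m : ℕ}
    (hm : m ≠ 0) (N : ℕ) :
    ∑ k ∈ range m, ‖coeff k F‖ ^ 2 + ∑ j ∈ range N, ‖coeff (m + j) F + coeff j (H * F)‖ ^ 2 ≤
      1 + ∑ j ∈ range N, ‖coeff j H‖ ^ 2 := by
  have coeff_low (P : 𝕜⟦X⟧) {k : ℕ} (hk : k ∈ range m) : coeff k (X ^ m * P) = 0 := by
    rw [coeff_X_pow_mul', if_neg (mem_range.1 hk).not_ge]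
  have coeff_high (P : 𝕜⟦X⟧) (j : ℕ) : coeff (m + j) (X ^ m * P) = coeff j P := by
    rw [add_comm, coeff_X_pow_mul]
  have sum_low : ∑ k ∈ range m, ‖coeff k (1 + X ^ m * H)‖ ^ 2 = 1 := by
    rw [sum_eq_single_of_mem 0 (mem_range.2 (Nat.pos_of_ne_zero hm)) fun k hk hk0 ↦ ?_]
    · rw [map_add, coeff_low H (mem_range.2 (Nat.pos_of_ne_zero hm))]
      simp
    · rw [map_add, coeff_low H hk]
      simp [coeff_one, hk0]
  have contraction := hF (1 + X ^ m * H) (m + N)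
  rw [sum_range_add, sum_range_add, sum_low] at contraction
  convert contraction using 4 with k hk j _ j _
  · rw [add_mul, one_mul, mul_assoc, map_add, coeff_low _ hk, add_zero]
  · rw [add_mul, one_mul, mul_assoc, map_add, coeff_high]
  · simp [coeff_high, coeff_one, hm]

theorem exists_norm_add_coeff_mul_eq (F : 𝕜⟦X⟧) (b : 𝕜) {t : ℕ → ℝ} (ht : ∀ i, 0 ≤ t i) (n : ℕ) :
    ∃ H : 𝕜⟦X⟧, (∀ j, ‖coeff j H‖ = t (n - j) * ‖coeff (n - j) F‖) ∧
      ‖b + coeff n (H * F)‖ = ‖b‖ + ∑ i ∈ range (n + 1), t i * ‖coeff i F‖ ^ 2 := by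
  obtain ⟨θ, norm_θ, hθ⟩ := RCLike.exists_norm_mul_eq_self b
  let H : 𝕜⟦X⟧ := mk fun j ↦ θ * (t (n - j) * conj (coeff (n - j) F))
  set S : ℝ := ∑ i ∈ range (n + 1), t i * ‖coeff i F‖ ^ 2 with hS
  have coeff_mul_eq : coeff n (H * F) = θ * S := by
    rw [mul_comm H F, coeff_mul, Nat.sum_antidiagonal_eq_sum_range_succ_mk, hS, RCLike.ofReal_sum,
      mul_sum]
    refine sum_congr rfl fun i hi ↦ ?_
    rw [coeff_mk, Nat.sub_sub_self (mem_range_succ_iff.1 hi)]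
    push_cast
    rw [← RCLike.conj_mul]
    ring
  refine ⟨H, fun j ↦ by simp [H, norm_θ, abs_of_nonneg (ht _)], ?_⟩
  calc ‖b + coeff n (H * F)‖ = ‖θ * ((‖b‖ + S : ℝ) : 𝕜)‖ := by
        rw [coeff_mul_eq, RCLike.ofReal_add, mul_add, hθ]
    _ = ‖b‖ + S := by
        have : 0 ≤ S := sum_nonneg fun i _ ↦ mul_nonneg (ht i) (sq_nonneg _)
        rw [norm_mul, norm_θ, one_mul, RCLike.norm_of_nonneg (by positivity)]

theorem IsMulContractive.exists_norm_coeff_add_sq_add_le (hF : IsMulContractive F) {m : ℕ}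
    (hm : m ≠ 0) (n : ℕ) {t : ℕ → ℝ} (ht : ∀ i, 0 ≤ t i) :
    ∃ H : 𝕜⟦X⟧, (∀ j, ‖coeff j H‖ = t (n - j) * ‖coeff (n - j) F‖) ∧
      (‖coeff (m + n) F‖ + ∑ i ∈ range (n + 1), t i * ‖coeff i F‖ ^ 2) ^ 2 +
          ∑ k ∈ range m, ‖coeff k F‖ ^ 2 +
          ∑ j ∈ range n, ‖coeff (m + j) F + coeff j (H * F)‖ ^ 2 ≤
        1 + ∑ i ∈ range (n + 1), (t i * ‖coeff i F‖) ^ 2 := by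
  obtain ⟨H, norm_H, norm_top⟩ := exists_norm_add_coeff_mul_eq F (coeff (m + n) F) ht n
  refine ⟨H, norm_H, ?_⟩
  have sum_H : ∑ j ∈ range (n + 1), ‖coeff j H‖ ^ 2 =
      ∑ i ∈ range (n + 1), (t i * ‖coeff i F‖) ^ 2 := by
    simpa only [norm_H, Nat.add_sub_cancel] using
      sum_range_reflect (fun i ↦ (t i * ‖coeff i F‖) ^ 2) (n + 1)
  have contraction := hF.sum_sq_norm_coeff_add_le H hm (n + 1)
  rw [sum_range_succ _ n, norm_top, sum_H] at contraction
  linarith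

theorem IsMulContractive.norm_coeff_odd_le (hF : IsMulContractive F) (n : ℕ) :
    ‖coeff (2 * n + 1) F‖ ≤ 1 - ∑ k ∈ range (n + 1), ‖coeff k F‖ ^ 2 := by
  obtain ⟨H, -, bound⟩ :=
    hF.exists_norm_coeff_add_sq_add_le (Nat.add_one_ne_zero n) n (t := 1) fun _ ↦ zero_le_one
  simp only [Pi.one_apply, one_mul, show n + 1 + n = 2 * n + 1 by ring] at bound
  have rest_nonneg : 0 ≤ ∑ j ∈ range n, ‖coeff (n + 1 + j) F + coeff j (H * F)‖ ^ 2 := by positivity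
  have sq_le_one : (‖coeff (2 * n + 1) F‖ + ∑ k ∈ range (n + 1), ‖coeff k F‖ ^ 2) ^ 2 ≤ 1 := by
    linarith
  linarith [(sq_le_one_iff₀ (by positivity)).1 sq_le_one]

theorem IsMulContractive.norm_coeff_even_add_sq_add_sq_le (hF : IsMulContractive F) (n : ℕ) {τ : ℝ}
    (hτ : 0 ≤ τ) :
    (‖coeff (2 * n + 2) F‖ +
          (∑ k ∈ range (n + 1), ‖coeff k F‖ ^ 2 + τ * ‖coeff (n + 1) F‖ ^ 2)) ^ 2 +
        (‖coeff (n + 1) F‖ - τ * ‖coeff (n + 1) F‖ * ‖coeff 0 F‖) ^ 2 ≤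
      1 + (τ * ‖coeff (n + 1) F‖) ^ 2 := by
  let t : ℕ → ℝ := fun i ↦ if i = n + 1 then τ else 1
  have t_nonneg (i : ℕ) : 0 ≤ t i := by
    simp only [t]
    split_ifs <;> positivity
  have t_top : t (n + 1) = τ := if_pos rfl
  have t_of_mem {i : ℕ} (hi : i ∈ range (n + 1)) : t i = 1 := if_neg (mem_range.1 hi).ne
  have sum_weighted : ∑ i ∈ range (n + 1), t i * ‖coeff i F‖ ^ 2 =
      ∑ i ∈ range (n + 1), ‖coeff i F‖ ^ 2 :=
    sum_congr rfl fun i hi ↦ by rw [t_of_mem hi, one_mul]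
  have sum_weighted_sq : ∑ i ∈ range (n + 1), (t i * ‖coeff i F‖) ^ 2 =
      ∑ i ∈ range (n + 1), ‖coeff i F‖ ^ 2 :=
    sum_congr rfl fun i hi ↦ by rw [t_of_mem hi, one_mul]
  obtain ⟨H, norm_H, bound⟩ :=
    hF.exists_norm_coeff_add_sq_add_le (Nat.add_one_ne_zero n) (n + 1) t_nonneg
  rw [sum_range_succ _ (n + 1), sum_range_succ _ (n + 1), t_top, sum_weighted, sum_weighted_sq,
    show n + 1 + (n + 1) = 2 * n + 2 by ring] at bound
  have norm_coeff_zero : ‖coeff 0 (H * F)‖ = τ * ‖coeff (n + 1) F‖ * ‖coeff 0 F‖ := by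
    rw [coeff_mul, Nat.antidiagonal_zero, sum_singleton, norm_mul, norm_H, Nat.sub_zero, t_top]
  have first_term_ge : (‖coeff (n + 1) F‖ - τ * ‖coeff (n + 1) F‖ * ‖coeff 0 F‖) ^ 2 ≤
      ‖coeff (n + 1 + 0) F + coeff 0 (H * F)‖ ^ 2 := by
    rw [← norm_coeff_zero, ← norm_neg (coeff 0 (H * F)), ← sub_neg_eq_add]
    exact sq_le_sq.2 ((abs_norm_sub_norm_le _ _).trans (le_abs_self _))
  have first_term_le : ‖coeff (n + 1 + 0) F + coeff 0 (H * F)‖ ^ 2 ≤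
      ∑ j ∈ range (n + 1), ‖coeff (n + 1 + j) F + coeff j (H * F)‖ ^ 2 :=
    single_le_sum (f := fun j ↦ ‖coeff (n + 1 + j) F + coeff j (H * F)‖ ^ 2)
      (fun _ _ ↦ sq_nonneg _) (mem_range.2 n.succ_pos)
  linarith

theorem IsMulContractive.norm_coeff_even_le (hF : IsMulContractive F) (n : ℕ) :
    ‖coeff (2 * n + 2) F‖ ≤ 1 - ∑ k ∈ range (n + 1), ‖coeff k F‖ ^ 2 -
      1 / (1 + ‖coeff 0 F‖) * ‖coeff (n + 1) F‖ ^ 2 := by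
  set τ : ℝ := 1 / (1 + ‖coeff 0 F‖) with hτ
  -- `τ` is the weight for which the two squares not involving `coeff (2 * n + 2) F` cancel.
  have weight_eq : ‖coeff (n + 1) F‖ - τ * ‖coeff (n + 1) F‖ * ‖coeff 0 F‖ =
      τ * ‖coeff (n + 1) F‖ := by
    rw [hτ]
    field_simp
    ring
  have bound := hF.norm_coeff_even_add_sq_add_sq_le n (τ := τ) (by positivity)
  rw [weight_eq, add_le_add_iff_right] at bound
  linarith [(sq_le_one_iff₀ (by positivity)).1 bound]

theorem IsMulContractive.norm_coeff_succ_le (hF : IsMulContractive F) (n : ℕ) :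
    ‖coeff (n + 1) F‖ ≤ 1 - ‖coeff 0 F‖ ^ 2 := by
  have sq_le_sum (m : ℕ) : ‖coeff 0 F‖ ^ 2 ≤ ∑ k ∈ range (m + 1), ‖coeff k F‖ ^ 2 :=
    single_le_sum (f := fun k ↦ ‖coeff k F‖ ^ 2) (fun _ _ ↦ sq_nonneg _) (mem_range.2 m.succ_pos)
  obtain ⟨m, rfl | rfl⟩ := n.even_or_odd'
  · linarith [hF.norm_coeff_odd_le m, sq_le_sum m]
  · have : 0 ≤ 1 / (1 + ‖coeff 0 F‖) * ‖coeff (m + 1) F‖ ^ 2 := by positivity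
    linarith [hF.norm_coeff_even_le m, sq_le_sum m]

end Coefficients

section Bohr

variable {b : ℕ → ℝ} {τ r : ℝ}

theorem sum_range_add_mul_sum_range_add_tail_le
    (hodd : ∀ n, b (2 * n + 1) ≤ 1 - ∑ k ∈ range (n + 1), b k ^ 2)
    (heven : ∀ n, b (2 * n + 2) ≤ 1 - ∑ k ∈ range (n + 1), b k ^ 2 - τ * b (n + 1) ^ 2)
    (hr0 : 0 ≤ r) (hr1 : r < 1) (N : ℕ) :
    ∑ n ∈ range (2 * N), b (n + 1) * r ^ (n + 1) +
        (τ + r / (1 - r)) * ∑ n ∈ range N, b (n + 1) ^ 2 * r ^ (2 * (n + 1)) +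
        (1 - ∑ k ∈ range (N + 1), b k ^ 2) * (r ^ (2 * N + 1) / (1 - r)) ≤
      (1 - b 0 ^ 2) * (r / (1 - r)) := by
  have hr : 1 - r ≠ 0 := by linarith
  induction N with
  | zero => simp
  | succ N ih =>
    refine le_trans ?_ ih
    rw [show 2 * (N + 1) = 2 * N + 1 + 1 by ring, sum_range_succ, sum_range_succ,
      sum_range_succ _ N, sum_range_succ _ (N + 1)]
    set s := ∑ k ∈ range (N + 1), b k ^ 2
    have odd_term := mul_le_mul_of_nonneg_right (hodd N) (pow_nonneg hr0 (2 * N + 1))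
    have even_term := mul_le_mul_of_nonneg_right (heven N) (pow_nonneg hr0 (2 * N + 2))
    have tail_split : r ^ (2 * N + 1) / (1 - r) =
        r ^ (2 * N + 1) + r ^ (2 * N + 2) + r ^ (2 * N + 3) / (1 - r) := by
      field_simp
      ring
    have weight_split : (τ + r / (1 - r)) * r ^ (2 * N + 2) =
        τ * r ^ (2 * N + 2) + r ^ (2 * N + 3) / (1 - r) := by
      field_simp
      ring
    linear_combination odd_term + even_term - (1 - s) * tail_split +
      b (N + 1) ^ 2 * weight_split

theorem tsum_add_mul_tsum_le_of_odd_even_le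
    (hodd : ∀ n, b (2 * n + 1) ≤ 1 - ∑ k ∈ range (n + 1), b k ^ 2)
    (heven : ∀ n, b (2 * n + 2) ≤ 1 - ∑ k ∈ range (n + 1), b k ^ 2 - τ * b (n + 1) ^ 2)
    (hb : ∀ n, 0 ≤ b n) (hr0 : 0 ≤ r) (hr1 : r < 1)
    (hsum : Summable fun n ↦ b n * r ^ n) (hsum_sq : Summable fun n ↦ b n ^ 2 * r ^ (2 * n)) :
    ∑' n, b (n + 1) * r ^ (n + 1) +
        (τ + r / (1 - r)) * ∑' n, b (n + 1) ^ 2 * r ^ (2 * (n + 1)) ≤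
      (1 - b 0 ^ 2) * (r / (1 - r)) := by
  have tendsto_sum := ((summable_nat_add_iff 1).2 hsum).hasSum.tendsto_sum_nat.comp
    (tendsto_id.const_mul_atTop' (show 0 < 2 by norm_num))
  have tendsto_sum_sq :=
    ((summable_nat_add_iff 1).2 hsum_sq).hasSum.tendsto_sum_nat.const_mul (τ + r / (1 - r))
  refine le_of_tendsto' (tendsto_sum.add tendsto_sum_sq) fun N ↦ ?_
  have tail_nonneg : 0 ≤ (1 - ∑ k ∈ range (N + 1), b k ^ 2) * (r ^ (2 * N + 1) / (1 - r)) :=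
    mul_nonneg ((hb _).trans (hodd N)) (div_nonneg (pow_nonneg hr0 _) (sub_nonneg.2 hr1.le))
  exact le_trans (le_add_of_nonneg_right tail_nonneg)
    (sum_range_add_mul_sum_range_add_tail_le hodd heven hr0 hr1 N)

theorem tsum_nat_mul_sq_mul_pow_le {M : ℝ} (hb : ∀ n, |b (n + 1)| ≤ M) (hr0 : 0 ≤ r) (hr1 : r < 1) :
    ∑' n : ℕ, n * b n ^ 2 * r ^ (2 * n) ≤ M ^ 2 * (r ^ 2 / (1 - r ^ 2) ^ 2) := by
  have norm_sq_lt_one : ‖r ^ 2‖ < 1 := by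
    rw [Real.norm_of_nonneg (sq_nonneg r)]
    exact pow_lt_one₀ hr0 hr1 two_ne_zero
  have hasSum_bound :=
    (hasSum_coe_mul_geometric_of_norm_lt_one norm_sq_lt_one).mul_left (M ^ 2)
  have term_le (n : ℕ) : n * b n ^ 2 * r ^ (2 * n) ≤ M ^ 2 * (n * (r ^ 2) ^ n) := by
    rw [pow_mul, mul_comm (n : ℝ), mul_assoc]
    rcases n with _ | n
    · simp
    · gcongr ?_ * _
      exact sq_le_sq' (abs_le.1 (hb n)).1 (abs_le.1 (hb n)).2
  rw [← hasSum_bound.tsum_eq]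
  exact (hasSum_bound.summable.of_nonneg_of_le (fun n ↦ by positivity) term_le).tsum_le_tsum
    term_le hasSum_bound.summable

theorem summable_pow_mul_pow_of_le_one (hb0 : ∀ n, 0 ≤ b n) (hb1 : ∀ n, b n ≤ 1) (hr0 : 0 ≤ r)
    (hr1 : r < 1) {k : ℕ} (hk : k ≠ 0) : Summable fun n ↦ b n ^ k * r ^ (k * n) := by
  refine (summable_geometric_of_lt_one (pow_nonneg hr0 k)
    (pow_lt_one₀ hr0 hr1 hk)).of_nonneg_of_le
    (fun n ↦ mul_nonneg (pow_nonneg (hb0 n) k) (pow_nonneg hr0 _)) fun n ↦ ?_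
  rw [pow_mul]
  exact mul_le_of_le_one_left (by positivity) (pow_le_one₀ (hb0 n) (hb1 n))

theorem IsMulContractive.tsum_norm_coeff_add_mul_tsum_le {𝕜 : Type*} [RCLike 𝕜] {F : 𝕜⟦X⟧}
    (hF : IsMulContractive F) (hr0 : 0 ≤ r) (hr1 : r < 1) :
    ∑' n, ‖coeff n F‖ * r ^ n +
        (1 / (1 + ‖coeff 0 F‖) + r / (1 - r)) *
          ∑' n, ‖coeff (n + 1) F‖ ^ 2 * r ^ (2 * (n + 1)) ≤
      ‖coeff 0 F‖ + (1 - ‖coeff 0 F‖ ^ 2) * (r / (1 - r)) := by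
  have summable_pow {k : ℕ} (hk : k ≠ 0) : Summable fun n ↦ ‖coeff n F‖ ^ k * r ^ (k * n) :=
    summable_pow_mul_pow_of_le_one (b := fun n ↦ ‖coeff n F‖) (fun _ ↦ norm_nonneg _)
      hF.norm_coeff_le_one hr0 hr1 hk
  have summable_one : Summable fun n ↦ ‖coeff n F‖ * r ^ n := by
    simpa using summable_pow one_ne_zero
  rw [summable_one.tsum_eq_zero_add, pow_zero, mul_one, add_assoc]
  refine add_le_add_right ?_ _
  exact tsum_add_mul_tsum_le_of_odd_even_le (b := fun n ↦ ‖coeff n F‖) hF.norm_coeff_odd_le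
    hF.norm_coeff_even_le (fun _ ↦ norm_nonneg _) hr0 hr1 summable_one (summable_pow two_ne_zero)

theorem add_mul_div_add_mul_div_sq_le_one {A : ℝ} (hA0 : 0 ≤ A) (hA1 : A ≤ 1) (hr0 : 0 ≤ r)
    (hr : r ≤ 1 / 3) :
    A + (1 - A ^ 2) * (r / (1 - r)) + 8 / 9 * ((1 - A ^ 2) ^ 2 * (r ^ 2 / (1 - r ^ 2) ^ 2)) ≤
      1 := by
  have geom_le : r / (1 - r) ≤ 1 / 2 := by
    rw [div_le_iff₀ (by linarith)]
    linarith
  have area_le : r ^ 2 / (1 - r ^ 2) ^ 2 ≤ 9 / 64 := by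
    have : r / (1 - r ^ 2) ≤ 3 / 8 := by
      rw [div_le_iff₀ (by nlinarith)]
      nlinarith
    calc r ^ 2 / (1 - r ^ 2) ^ 2 = (r / (1 - r ^ 2)) ^ 2 := (div_pow _ _ _).symm
      _ ≤ (3 / 8) ^ 2 := pow_le_pow_left₀ (div_nonneg hr0 (by nlinarith)) this 2
      _ = 9 / 64 := by norm_num
  have sq_nonneg_one_sub : 0 ≤ 1 - A ^ 2 := by nlinarith
  have sq_le : (1 - A ^ 2) ^ 2 ≤ (2 * (1 - A)) ^ 2 := by
    gcongr
    nlinarith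
  calc A + (1 - A ^ 2) * (r / (1 - r)) + 8 / 9 * ((1 - A ^ 2) ^ 2 * (r ^ 2 / (1 - r ^ 2) ^ 2))
      ≤ A + (1 - A ^ 2) * (1 / 2) + 8 / 9 * ((2 * (1 - A)) ^ 2 * (9 / 64)) := by gcongr
    _ = 1 := by ring

end Bohr

/-- Theorem 4, first part: for a bounded analytic self-map `f` of the unit
disk with coefficients `a n`, and `0 ≤ r ≤ 1/3`:
`∑_{n=0}^∞ |aₙ| rⁿ + (1/(1+|a₀|) + r/(1-r)) ∑_{n=1}^∞ |aₙ|² r^{2n}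
  + (8/9) ∑_{n=1}^∞ n |aₙ|² r^{2n} ≤ 1`
(the last sum equals `S_r/π`, the area quantity). -/
theorem stmt14 (f : ℂ → ℂ) (a : ℕ → ℂ)
    (hf : DifferentiableOn ℂ f (Metric.ball 0 1))
    (hb : ∀ z ∈ Metric.ball (0 : ℂ) 1, ‖f z‖ ≤ 1)
    (hs : ∀ z ∈ Metric.ball (0 : ℂ) 1, HasSum (fun n => a n * z ^ n) (f z))
    (r : ℝ) (hr0 : 0 ≤ r) (hr : r ≤ 1 / 3) :
    (∑' n : ℕ, ‖a n‖ * r ^ n)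
      + (1 / (1 + ‖a 0‖) + r / (1 - r)) * ∑' n : ℕ, ‖a (n + 1)‖ ^ 2 * r ^ (2 * (n + 1))
      + 8 / 9 * ∑' n : ℕ, (n : ℝ) * ‖a n‖ ^ 2 * r ^ (2 * n)
      ≤ 1 := by
  have contractive : IsMulContractive (mk a) := isMulContractive_mk_of_norm_le_one hb hs
  have norm_zero_le : ‖a 0‖ ≤ 1 := by simpa using contractive.norm_coeff_le_one 0
  have bohr := contractive.tsum_norm_coeff_add_mul_tsum_le hr0 (by linarith)
  have area : ∑' n : ℕ, (n : ℝ) * ‖a n‖ ^ 2 * r ^ (2 * n) ≤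
      (1 - ‖a 0‖ ^ 2) ^ 2 * (r ^ 2 / (1 - r ^ 2) ^ 2) :=
    tsum_nat_mul_sq_mul_pow_le (fun n ↦ by simpa using contractive.norm_coeff_succ_le n) hr0
      (by linarith)
  simp only [coeff_mk] at bohr
  linarith [add_mul_div_add_mul_div_sq_le_one (norm_nonneg (a 0)) norm_zero_le hr0 hr]
end

section
/- For every r with 0 ≤ r ≤ 1/(3 - |a_0|): |a_0|² + ∑_{n=1}^∞ |a_n| r^n + (1/(1+|a_0|) + r/(1-r)) · ∑_{n=1}^∞ |a_n|² r^{2n} + (9/8) · ∑_{n=1}^∞ n |a_n|² r^{2n} ≤ 1. -/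
/-!
For a power series `φ` bounded by `1` on the unit disk, multiplication by `φ` contracts the `ℓ²`
norm of coefficients, even after truncation: this is Parseval's identity on the circles of radius
`ρ < 1`. Testing the contraction on `g + μ X ^ (p + 1) h`, where `g` has degree at most `p`, `h` is
the reversed conjugate of `φ`, for which one coefficient of `h φ` is `∑_{k ≤ m} |φ_k|²`, and the
phase `μ` prevents cancellation, gives Carlson's inequalities: `|φ_N|` is at most `1` minus the sum
of squares of the first half of the coefficients. Weighting these by `r ^ N` and summing over
`N ≥ 1` bounds the two middle terms together by `(1 - |φ₀|²) r / (1 - r)`. The area term is at most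
`((1 - |φ₀|²) r / (1 - r²))²`, because `|φ_n| ≤ 1 - |φ₀|²` for `n ≥ 1`. What remains is an
inequality between `|φ₀|` and `r`, whose left side is largest at `r = 1 / (3 - |φ₀|)`.
-/

open Filter Finset PowerSeries
open scoped ComplexConjugate

/-- The power series of the Schur class: those converging on the open unit disk to a function
bounded by `1`. -/
def IsSchurSeries (φ : ℂ⟦X⟧) : Prop :=
  ∀ z : ℂ, ‖z‖ < 1 → ∃ w, ‖w‖ ≤ 1 ∧ HasSum (fun n => coeff n φ * z ^ n) w

section Contraction

theorem sum_support_sq_norm_coeff_mul_le (p : Polynomial ℂ) {q : Polynomial ℂ} {M : ℝ}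
    (hq : ∀ z : ℂ, ‖z‖ = 1 → ‖q.eval z‖ ≤ M) :
    ∑ k ∈ (p * q).support, ‖(p * q).coeff k‖ ^ 2 ≤ M ^ 2 * ∑ k ∈ p.support, ‖p.coeff k‖ ^ 2 := by
  rw [Polynomial.sum_sq_norm_coeff_eq_circleAverage, Polynomial.sum_sq_norm_coeff_eq_circleAverage,
    ← smul_eq_mul (M ^ 2), ← Real.circleAverage_fun_smul]
  have hint (P : Polynomial ℂ) : CircleIntegrable (fun z => ‖P.eval z‖ ^ 2) 0 1 :=
    ContinuousOn.circleIntegrable zero_le_one (by fun_prop)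
  refine Real.circleAverage_mono (hint _) (hint p).const_fun_smul fun z hz => ?_
  have hz1 : ‖z‖ = 1 := by simpa using hz
  calc ‖(p * q).eval z‖ ^ 2 = ‖q.eval z‖ ^ 2 * ‖p.eval z‖ ^ 2 := by
        rw [Polynomial.eval_mul, norm_mul, mul_pow, mul_comm]
    _ ≤ M ^ 2 * ‖p.eval z‖ ^ 2 := by gcongr; exact hq z hz1

theorem sum_range_sq_norm_coeff_le_sum_support (p : Polynomial ℂ) (K : ℕ) :
    ∑ k ∈ range K, ‖p.coeff k‖ ^ 2 ≤ ∑ k ∈ p.support, ‖p.coeff k‖ ^ 2 := by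
  refine (sum_filter_ne_zero (range K)).symm.trans_le
    (sum_le_sum_of_subset_of_nonneg (fun k hk => ?_) fun _ _ _ => by positivity)
  simpa using (mem_filter.1 hk).2

theorem sum_support_sq_norm_coeff_trunc (g : ℂ⟦X⟧) (K : ℕ) :
    ∑ k ∈ (trunc K g).support, ‖(trunc K g).coeff k‖ ^ 2 = ∑ k ∈ range K, ‖coeff k g‖ ^ 2 := by
  have hsupp : (trunc K g).support ⊆ range K := fun k hk => by
    by_contra hkK
    simp_all [coeff_trunc]
  rw [sum_subset hsupp fun k _ hk => by simpa using hk]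
  refine sum_congr rfl fun k hk => ?_
  rw [coeff_trunc, if_pos (mem_range.1 hk)]

namespace IsSchurSeries

variable {φ : ℂ⟦X⟧}

theorem summable_norm (hφ : IsSchurSeries φ) {r : ℝ} (hr0 : 0 ≤ r) (hr1 : r < 1) :
    Summable fun n => ‖coeff n φ‖ * r ^ n := by
  obtain ⟨w, -, hw⟩ := hφ r (by rwa [Complex.norm_of_nonneg hr0])
  simpa [abs_of_nonneg hr0] using hw.summable.norm

theorem eventually_norm_eval_trunc_rescale_le (hφ : IsSchurSeries φ) {ρ M : ℝ} (hρ0 : 0 ≤ ρ)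
    (hρ1 : ρ < 1) (hM : 1 < M) :
    ∀ᶠ N in atTop, ∀ z : ℂ, ‖z‖ = 1 → ‖(trunc N (rescale (ρ : ℂ) φ)).eval z‖ ≤ M := by
  have hunif : TendstoUniformlyOn (fun N z => ∑ n ∈ range N, coeff n φ * (ρ * z) ^ n)
      (fun z => ∑' n, coeff n φ * (ρ * z) ^ n) atTop {z : ℂ | ‖z‖ = 1} := by
    refine tendstoUniformlyOn_tsum_nat (hφ.summable_norm hρ0 hρ1) fun n z hz => ?_
    simp [show ‖z‖ = 1 from hz, abs_of_nonneg hρ0]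
  filter_upwards [Metric.tendstoUniformlyOn_iff.1 hunif (M - 1) (by linarith)] with N hN z hz
  obtain ⟨w, hw1, hw⟩ := hφ (ρ * z) (by simpa [hz, abs_of_nonneg hρ0])
  have hclose := hN z hz
  rw [hw.tsum_eq, dist_eq_norm'] at hclose
  have heval : (trunc N (rescale (ρ : ℂ) φ)).eval z = ∑ n ∈ range N, coeff n φ * (ρ * z) ^ n := by
    rw [Polynomial.eval, eval₂_trunc_eq_sum_range]
    refine sum_congr rfl fun n _ => ?_
    rw [coeff_rescale, RingHom.id_apply]
    ring
  rw [heval]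
  linarith [norm_le_norm_add_norm_sub' (∑ n ∈ range N, coeff n φ * (ρ * z) ^ n) w]

theorem sum_sq_norm_coeff_mul_mul_pow_le (hφ : IsSchurSeries φ) (g : ℂ⟦X⟧) (K : ℕ) {ρ M : ℝ}
    (hρ0 : 0 ≤ ρ) (hρ1 : ρ < 1) (hM : 1 < M) :
    ∑ k ∈ range K, (ρ ^ k * ‖coeff k (g * φ)‖) ^ 2 ≤
      M ^ 2 * ∑ k ∈ range K, (ρ ^ k * ‖coeff k g‖) ^ 2 := by
  obtain ⟨N, hN, hKN⟩ := ((hφ.eventually_norm_eval_trunc_rescale_le hρ0 hρ1 hM).and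
    (eventually_ge_atTop K)).exists
  set p := trunc K (rescale (ρ : ℂ) g)
  set q := trunc N (rescale (ρ : ℂ) φ)
  have hnorm (ψ : ℂ⟦X⟧) (k : ℕ) : ‖coeff k (rescale (ρ : ℂ) ψ)‖ = ρ ^ k * ‖coeff k ψ‖ := by
    simp [coeff_rescale, abs_of_nonneg hρ0]
  have hcoeff : ∀ k ∈ range K, ρ ^ k * ‖coeff k (g * φ)‖ = ‖(p * q).coeff k‖ := fun k hk => by
    have hkK := mem_range.1 hk
    rw [← hnorm, map_mul, coeff_mul_eq_coeff_trunc_mul_trunc₂ _ _ hkK (hkK.trans_le hKN),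
      ← Polynomial.coe_mul, Polynomial.coeff_coe]
  calc ∑ k ∈ range K, (ρ ^ k * ‖coeff k (g * φ)‖) ^ 2
      = ∑ k ∈ range K, ‖(p * q).coeff k‖ ^ 2 := sum_congr rfl fun k hk => by rw [hcoeff k hk]
    _ ≤ ∑ k ∈ (p * q).support, ‖(p * q).coeff k‖ ^ 2 := sum_range_sq_norm_coeff_le_sum_support _ K
    _ ≤ M ^ 2 * ∑ k ∈ p.support, ‖p.coeff k‖ ^ 2 := sum_support_sq_norm_coeff_mul_le p hN
    _ = M ^ 2 * ∑ k ∈ range K, (ρ ^ k * ‖coeff k g‖) ^ 2 := by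
        simp_rw [p, sum_support_sq_norm_coeff_trunc, hnorm]

theorem sum_sq_norm_coeff_mul_le (hφ : IsSchurSeries φ) (g : ℂ⟦X⟧) (K : ℕ) :
    ∑ k ∈ range K, ‖coeff k (g * φ)‖ ^ 2 ≤ ∑ k ∈ range K, ‖coeff k g‖ ^ 2 := by
  have hclosed : IsClosed {ρ : ℝ | ∑ k ∈ range K, (ρ ^ k * ‖coeff k (g * φ)‖) ^ 2 ≤
      (2 - ρ) ^ 2 * ∑ k ∈ range K, (ρ ^ k * ‖coeff k g‖) ^ 2} :=
    isClosed_le (by fun_prop) (by fun_prop)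
  have hsub := closure_minimal (fun ρ hρ => hφ.sum_sq_norm_coeff_mul_mul_pow_le g K hρ.1 hρ.2
    (M := 2 - ρ) (by linarith [hρ.2])) hclosed (s := Set.Ico 0 1)
  rw [closure_Ico zero_ne_one] at hsub
  have hone := Set.mem_ofPred.1 (hsub (Set.right_mem_Icc.2 zero_le_one))
  norm_num at hone
  exact hone

end IsSchurSeries

end Contraction

section Carlson

theorem exists_norm_eq_norm_add_mul {𝕜 : Type*} [RCLike 𝕜] (z w : 𝕜) {b : ℝ} (hb : 0 ≤ b) :
    ∃ β : 𝕜, ‖β‖ = b ∧ ‖z + β * w‖ = ‖z‖ + b * ‖w‖ := by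
  obtain ⟨c, hc, hcz⟩ := RCLike.exists_norm_mul_eq_self z
  obtain ⟨d, hd, hdw⟩ := RCLike.exists_norm_eq_mul_self w
  refine ⟨c * b * d, by simp [hc, hd, abs_of_nonneg hb], ?_⟩
  have hfactor : z + c * b * d * w = c * ((‖z‖ + b * ‖w‖ : ℝ) : 𝕜) := by
    push_cast
    linear_combination -hcz - c * b * hdw
  rw [hfactor, norm_mul, hc, one_mul, RCLike.norm_ofReal, abs_of_nonneg (by positivity)]

/-- The series `∑ i, conj φ_{m - i} X ^ i`, whose first `m + 1` coefficients are the conjugates of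
those of `φ` in reverse order. Only these matter: for `i > m` truncated subtraction repeats
`conj φ₀`. -/
noncomputable def reverseConj (m : ℕ) (φ : ℂ⟦X⟧) : ℂ⟦X⟧ :=
  PowerSeries.mk fun i => conj (coeff (m - i) φ)

theorem coeff_reverseConj_mul (m : ℕ) (φ : ℂ⟦X⟧) :
    coeff m (reverseConj m φ * φ) = ((∑ k ∈ range (m + 1), ‖coeff k φ‖ ^ 2 : ℝ) : ℂ) := by
  rw [mul_comm, coeff_mul, Nat.sum_antidiagonal_eq_sum_range_succ_mk]
  push_cast
  refine sum_congr rfl fun k hk => ?_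
  rw [reverseConj, coeff_mk, Nat.sub_sub_self (mem_range_succ_iff.1 hk), Complex.mul_conj']

theorem sum_sq_norm_coeff_reverseConj (m : ℕ) (φ : ℂ⟦X⟧) :
    ∑ k ∈ range (m + 1), ‖coeff k (reverseConj m φ)‖ ^ 2 =
      ∑ k ∈ range (m + 1), ‖coeff k φ‖ ^ 2 := by
  simpa [reverseConj] using sum_range_reflect (fun k => ‖coeff k φ‖ ^ 2) (m + 1)

theorem sum_range_sq_norm_coeff_one (n : ℕ) :
    ∑ k ∈ range (n + 1), ‖coeff k (1 : ℂ⟦X⟧)‖ ^ 2 = 1 := by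
  simp [coeff_one, apply_ite]

theorem coeff_add_X_pow_mul_of_lt {R : Type*} [Semiring R] (ψ h : R⟦X⟧) {k n : ℕ} (hk : k < n) :
    coeff k (ψ + X ^ n * h) = coeff k ψ := by
  rw [map_add, coeff_X_pow_mul', if_neg hk.not_ge, add_zero]

theorem coeff_add_X_pow_mul {R : Type*} [Semiring R] (ψ h : R⟦X⟧) (n k : ℕ) :
    coeff (n + k) (ψ + X ^ n * h) = coeff (n + k) ψ + coeff k h := by
  rw [map_add, add_comm n, coeff_X_pow_mul]

theorem sum_range_sq_norm_coeff_add_X_pow_mul (ψ h : ℂ⟦X⟧) (n : ℕ) :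
    ∑ k ∈ range n, ‖coeff k (ψ + X ^ n * h)‖ ^ 2 = ∑ k ∈ range n, ‖coeff k ψ‖ ^ 2 :=
  sum_congr rfl fun k hk => by rw [coeff_add_X_pow_mul_of_lt ψ h (mem_range.1 hk)]

namespace IsSchurSeries

variable {φ : ℂ⟦X⟧}

theorem sum_sq_norm_coeff_mul_add_sq_le (hφ : IsSchurSeries φ) {g : ℂ⟦X⟧} {p : ℕ}
    (hg : ∀ k, p < k → coeff k g = 0) (m : ℕ) :
    ∑ k ∈ range (p + 1), ‖coeff k (g * φ)‖ ^ 2 +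
        (‖coeff (p + 1 + m) (g * φ)‖ + ∑ k ∈ range (m + 1), ‖coeff k φ‖ ^ 2) ^ 2 ≤
      ∑ k ∈ range (p + 1), ‖coeff k g‖ ^ 2 + ∑ k ∈ range (m + 1), ‖coeff k φ‖ ^ 2 := by
  set S := ∑ k ∈ range (m + 1), ‖coeff k φ‖ ^ 2 with hS
  have hS0 : 0 ≤ S := by positivity
  obtain ⟨μ, hμ, hphase⟩ :=
    exists_norm_eq_norm_add_mul (coeff (p + 1 + m) (g * φ)) (S : ℂ) zero_le_one
  rw [one_mul, Complex.norm_of_nonneg hS0] at hphase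
  set G := g + X ^ (p + 1) * (C μ * reverseConj m φ) with hG
  have hGφ : G * φ = g * φ + X ^ (p + 1) * (C μ * (reverseConj m φ * φ)) := by rw [hG]; ring
  have hnorm_G : ∑ k ∈ range (p + 1 + (m + 1)), ‖coeff k G‖ ^ 2 =
      ∑ k ∈ range (p + 1), ‖coeff k g‖ ^ 2 + S := by
    rw [sum_range_add, hG, sum_range_sq_norm_coeff_add_X_pow_mul, hS,
      ← sum_sq_norm_coeff_reverseConj m φ]
    congr! 2 with k
    rw [coeff_add_X_pow_mul, hg _ (by omega), zero_add, coeff_C_mul, norm_mul, hμ, one_mul]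
  calc ∑ k ∈ range (p + 1), ‖coeff k (g * φ)‖ ^ 2 + (‖coeff (p + 1 + m) (g * φ)‖ + S) ^ 2
      = ∑ k ∈ range (p + 1), ‖coeff k (G * φ)‖ ^ 2 + ‖coeff (p + 1 + m) (G * φ)‖ ^ 2 := by
        rw [hGφ, sum_range_sq_norm_coeff_add_X_pow_mul, coeff_add_X_pow_mul, coeff_C_mul,
          coeff_reverseConj_mul, hphase]
    _ ≤ ∑ k ∈ range (p + 1 + (m + 1)), ‖coeff k (G * φ)‖ ^ 2 := by
        rw [← add_assoc (p + 1) m 1, sum_range_succ _ (p + 1 + m)]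
        gcongr ?_ + _
        exact sum_le_sum_of_subset_of_nonneg (range_mono (Nat.le_add_right _ _))
          fun _ _ _ => by positivity
    _ ≤ ∑ k ∈ range (p + 1 + (m + 1)), ‖coeff k G‖ ^ 2 := hφ.sum_sq_norm_coeff_mul_le G _
    _ = ∑ k ∈ range (p + 1), ‖coeff k g‖ ^ 2 + S := hnorm_G

theorem norm_coeff_odd_add_sum_le_one (hφ : IsSchurSeries φ) (n : ℕ) :
    ‖coeff (2 * n + 1) φ‖ + ∑ k ∈ range (n + 1), ‖coeff k φ‖ ^ 2 ≤ 1 := by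
  have h := hφ.sum_sq_norm_coeff_mul_add_sq_le (g := 1) (p := n)
    (fun k hk => by rw [coeff_one, if_neg (by omega)]) n
  rw [sum_range_sq_norm_coeff_one, one_mul, show n + 1 + n = 2 * n + 1 by ring, add_comm,
    add_le_add_iff_right] at h
  exact (sq_le_one_iff₀ (by positivity)).1 h

theorem sq_norm_coeff_add_mul_add_sq_le (hφ : IsSchurSeries φ) (n : ℕ) (β : ℂ) :
    ‖coeff (n + 1) φ + β * coeff 0 φ‖ ^ 2 + (‖coeff (2 * n + 2) φ + β * coeff (n + 1) φ‖ +
      ∑ k ∈ range (n + 1), ‖coeff k φ‖ ^ 2) ^ 2 ≤ 1 + ‖β‖ ^ 2 := by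
  have hgφ : (1 + X ^ (n + 1) * C β) * φ = φ + X ^ (n + 1) * (C β * φ) := by ring
  have hg_coeff : coeff (n + 1) (1 + X ^ (n + 1) * C β) = β := by
    simp [coeff_one]
  have hgφ_coeff : coeff (n + 1) ((1 + X ^ (n + 1) * C β) * φ) =
      coeff (n + 1) φ + β * coeff 0 φ := by
    have h := coeff_add_X_pow_mul φ (C β * φ) (n + 1) 0
    rwa [add_zero, coeff_C_mul, ← hgφ] at h
  have hgφ_top : coeff (n + 1 + 1 + n) ((1 + X ^ (n + 1) * C β) * φ) =
      coeff (2 * n + 2) φ + β * coeff (n + 1) φ := by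
    rw [hgφ, show n + 1 + 1 + n = n + 1 + (n + 1) by ring, coeff_add_X_pow_mul, coeff_C_mul,
      show n + 1 + (n + 1) = 2 * n + 2 by ring]
  have hg_zero (k : ℕ) (hk : n + 1 < k) : coeff k (1 + X ^ (n + 1) * C β) = 0 := by
    obtain ⟨j, rfl⟩ := Nat.exists_eq_add_of_lt hk
    rw [add_assoc, coeff_add_X_pow_mul]
    simp [coeff_one]
  have h := hφ.sum_sq_norm_coeff_mul_add_sq_le hg_zero n
  rw [sum_range_succ, sum_range_succ _ (n + 1), sum_range_sq_norm_coeff_add_X_pow_mul,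
    sum_range_sq_norm_coeff_one, hg_coeff, hgφ_coeff, hgφ_top, hgφ,
    sum_range_sq_norm_coeff_add_X_pow_mul] at h
  linarith

theorem norm_coeff_even_add_sum_le_one (hφ : IsSchurSeries φ) (n : ℕ) :
    ‖coeff (2 * n + 2) φ‖ + ∑ k ∈ range (n + 1), ‖coeff k φ‖ ^ 2 +
      ‖coeff (n + 1) φ‖ ^ 2 / (1 + ‖coeff 0 φ‖) ≤ 1 := by
  set S := ∑ k ∈ range (n + 1), ‖coeff k φ‖ ^ 2
  -- For this `b` and `|β| = b`, `|φ_{n+1} + β φ₀| ≥ |φ_{n+1}| - b |φ₀| = b`.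
  set b := ‖coeff (n + 1) φ‖ / (1 + ‖coeff 0 φ‖) with hb
  have hb0 : 0 ≤ b := by positivity
  obtain ⟨β, hβ, hphase⟩ :=
    exists_norm_eq_norm_add_mul (coeff (2 * n + 2) φ) (coeff (n + 1) φ) hb0
  have hlower : b ≤ ‖coeff (n + 1) φ + β * coeff 0 φ‖ := by
    have hsub := norm_sub_le_norm_add (coeff (n + 1) φ) (β * coeff 0 φ)
    have hb_eq : b * (1 + ‖coeff 0 φ‖) = ‖coeff (n + 1) φ‖ := div_mul_cancel₀ _ (by positivity)
    rw [norm_mul, hβ] at hsub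
    linarith
  have h := hφ.sq_norm_coeff_add_mul_add_sq_le n β
  rw [hphase, hβ] at h
  have hsq : (‖coeff (2 * n + 2) φ‖ + b * ‖coeff (n + 1) φ‖ + S) ^ 2 ≤ 1 := by
    linarith [pow_le_pow_left₀ hb0 hlower 2]
  have hle := (sq_le_one_iff₀ (by positivity)).1 hsq
  have hdiv : ‖coeff (n + 1) φ‖ ^ 2 / (1 + ‖coeff 0 φ‖) = b * ‖coeff (n + 1) φ‖ := by
    rw [hb]
    ring
  linarith

theorem norm_coeff_odd_le (hφ : IsSchurSeries φ) (n : ℕ) :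
    ‖coeff (2 * n + 1) φ‖ + ∑ k ∈ range n, ‖coeff (k + 1) φ‖ ^ 2 ≤ 1 - ‖coeff 0 φ‖ ^ 2 := by
  have h := hφ.norm_coeff_odd_add_sum_le_one n
  rw [sum_range_succ'] at h
  linarith

theorem norm_coeff_even_le (hφ : IsSchurSeries φ) (n : ℕ) :
    ‖coeff (2 * n + 2) φ‖ + ∑ k ∈ range n, ‖coeff (k + 1) φ‖ ^ 2 +
      1 / (1 + ‖coeff 0 φ‖) * ‖coeff (n + 1) φ‖ ^ 2 ≤ 1 - ‖coeff 0 φ‖ ^ 2 := by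
  have h := hφ.norm_coeff_even_add_sum_le_one n
  rw [sum_range_succ', div_eq_mul_one_div, mul_comm _ (1 / (1 + ‖coeff 0 φ‖))] at h
  linarith

theorem norm_coeff_succ_le (hφ : IsSchurSeries φ) (n : ℕ) :
    ‖coeff (n + 1) φ‖ ≤ 1 - ‖coeff 0 φ‖ ^ 2 := by
  rcases n.even_or_odd' with ⟨m, rfl | rfl⟩
  · refine le_trans ?_ (hφ.norm_coeff_odd_le m)
    exact le_add_of_nonneg_right (by positivity)
  · refine le_trans ?_ (hφ.norm_coeff_even_le m)
    exact le_add_of_le_of_nonneg (le_add_of_nonneg_right (by positivity)) (by positivity)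

end IsSchurSeries

end Carlson

section Summation

theorem hasSum_sum_range_mul_pow {𝕜 : Type*} [NormedField 𝕜] [CompleteSpace 𝕜] {y : ℕ → 𝕜} {s : 𝕜}
    (hs : ‖s‖ < 1) (hy : Summable fun k => ‖y k * s ^ k‖) :
    HasSum (fun n => (∑ k ∈ range n, y k) * s ^ n) (s / (1 - s) * ∑' k, y k * s ^ k) := by
  have hgeom : HasSum (fun m => s ^ (m + 1)) (s / (1 - s)) := by
    simpa [pow_succ', div_eq_mul_inv] using (hasSum_geometric_of_norm_lt_one hs).mul_left s
  have hgeom_norm : Summable fun m => ‖s ^ (m + 1)‖ := by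
    simpa [pow_succ] using (summable_geometric_of_lt_one (norm_nonneg s) hs).mul_right ‖s‖
  have hcauchy (n : ℕ) : ∑ kl ∈ antidiagonal n, y kl.1 * s ^ kl.1 * s ^ (kl.2 + 1) =
      (∑ k ∈ range (n + 1), y k) * s ^ (n + 1) := by
    rw [Nat.sum_antidiagonal_eq_sum_range_succ_mk, sum_mul]
    refine sum_congr rfl fun k hk => ?_
    rw [mul_assoc, ← pow_add]
    congr 2
    have := mem_range.1 hk
    omega
  have hprod := (summable_norm_sum_mul_antidiagonal_of_summable_norm hy hgeom_norm).of_norm.hasSum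
  rw [← tsum_mul_tsum_eq_tsum_sum_antidiagonal_of_summable_norm hy hgeom_norm, hgeom.tsum_eq,
    mul_comm] at hprod
  simp only [hcauchy] at hprod
  simpa using (hasSum_nat_add_iff (f := fun n => (∑ k ∈ range n, y k) * s ^ n) 1).1 hprod

theorem tsum_mul_pow_add_mul_tsum_le {u y : ℕ → ℝ} {r c M : ℝ} (hr0 : 0 ≤ r) (hr1 : r < 1)
    (hu : Summable fun n => u n * r ^ (n + 1)) (hy : Summable fun n => y n * (r ^ 2) ^ n)
    (heven : ∀ n, u (2 * n) + ∑ k ∈ range n, y k ≤ M)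
    (hodd : ∀ n, u (2 * n + 1) + ∑ k ∈ range n, y k + c * y n ≤ M) :
    ∑' n, u n * r ^ (n + 1) + (c + r / (1 - r)) * ∑' n, y n * r ^ (2 * (n + 1)) ≤
      M * (r / (1 - r)) := by
  have hs : ‖r ^ 2‖ < 1 := by
    rw [norm_pow, Real.norm_of_nonneg hr0]
    exact pow_lt_one₀ hr0 hr1 two_ne_zero
  have heven_sum : Summable fun n => u (2 * n) * r ^ (2 * n + 1) :=
    hu.comp_injective (i := fun n => 2 * n) fun _ _ h => by simpa using h
  have hodd_sum : Summable fun n => u (2 * n + 1) * r ^ (2 * n + 1 + 1) :=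
    hu.comp_injective (i := fun n => 2 * n + 1) fun _ _ h => by simpa using h
  have hlhs := (heven_sum.hasSum.add hodd_sum.hasSum).add
    (((hasSum_sum_range_mul_pow hs hy.norm).mul_left (r + r ^ 2)).add
      (hy.hasSum.mul_left (c * r ^ 2)))
  have hrhs := (hasSum_geometric_of_norm_lt_one hs).mul_left (M * (r + r ^ 2))
  have hle := hasSum_le (fun n => ?_) hlhs hrhs
  · have hsq : ∑' n, y n * r ^ (2 * (n + 1)) = r ^ 2 * ∑' n, y n * (r ^ 2) ^ n := by
      rw [← tsum_mul_left]
      exact tsum_congr fun n => by ring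
    have hgeom : (r + r ^ 2) * (1 - r ^ 2)⁻¹ = r / (1 - r) := by
      have : 1 - r ≠ 0 := by linarith
      have : 1 - r ^ 2 ≠ 0 := by nlinarith
      field_simp
      ring
    rw [tsum_even_add_odd (f := fun n => u n * r ^ (n + 1)) heven_sum hodd_sum] at hle
    rw [hsq, ← hgeom]
    linear_combination hle
  · have heven_mul := mul_le_mul_of_nonneg_right (heven n) (pow_nonneg hr0 (2 * n + 1))
    have hodd_mul := mul_le_mul_of_nonneg_right (hodd n) (pow_nonneg hr0 (2 * n + 2))
    linear_combination heven_mul + hodd_mul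

end Summation

section Area

theorem tsum_coe_mul_sq_mul_pow_le {x : ℕ → ℝ} {r B : ℝ} (hr0 : 0 ≤ r) (hr1 : r < 1)
    (hx0 : ∀ n, 0 ≤ x n) (hx : ∀ n, x (n + 1) ≤ B) :
    ∑' n : ℕ, (n : ℝ) * x n ^ 2 * r ^ (2 * n) ≤ (B * (r / (1 - r ^ 2))) ^ 2 := by
  have hgeom : HasSum (fun n : ℕ => B ^ 2 * (n * (r ^ 2) ^ n)) ((B * (r / (1 - r ^ 2))) ^ 2) := by
    convert! (hasSum_coe_mul_geometric_of_norm_lt_one (r := r ^ 2) ?_).mul_left (B ^ 2) using 1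
    · rw [mul_pow, div_pow]
    · rw [norm_pow, Real.norm_of_nonneg hr0]
      exact pow_lt_one₀ hr0 hr1 two_ne_zero
  have hle (n : ℕ) : (n : ℝ) * x n ^ 2 * r ^ (2 * n) ≤ B ^ 2 * (n * (r ^ 2) ^ n) := by
    rcases n with - | n
    · simp
    · rw [pow_mul, mul_comm _ (x (n + 1) ^ 2), mul_assoc]
      gcongr
      exacts [hx0 _, hx n]
  rw [← hgeom.tsum_eq]
  exact Summable.tsum_le_tsum hle
    (Summable.of_nonneg_of_le (fun n => by positivity) hle hgeom.summable) hgeom.summable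

theorem one_div_two_sub_add_le_one {A : ℝ} (hA : A ≤ 1) :
    1 / (2 - A) + 9 / 8 * ((1 - A ^ 2) * ((3 - A) / ((2 - A) * (4 - A))) ^ 2) ≤ 1 := by
  have h2 : 0 < 2 - A := by linarith
  have h4 : 0 < 4 - A := by linarith
  have : 0 ≤ 1 - A := by linarith
  -- `9 / 8` is the largest admissible constant: it cancels the linear term in `1 - A`.
  have hdefect : 1 - (1 / (2 - A) + 9 / 8 * ((1 - A ^ 2) * ((3 - A) / ((2 - A) * (4 - A))) ^ 2)) =
      (1 - A) ^ 2 * (84 + 74 * (1 - A) + 17 * (1 - A) ^ 2) / (8 * ((2 - A) * (4 - A)) ^ 2) := by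
    field_simp
    ring
  rw [← sub_nonneg, hdefect]
  positivity

theorem div_one_sub_add_le_one {A r : ℝ} (hA0 : 0 ≤ A) (hA1 : A ≤ 1) (hr0 : 0 ≤ r)
    (hr : r ≤ 1 / (3 - A)) :
    r / (1 - r) + 9 / 8 * ((1 - A ^ 2) * (r / (1 - r ^ 2)) ^ 2) ≤ 1 := by
  have hA2 : 0 ≤ 1 - A ^ 2 := by nlinarith
  have h2 : 0 < 2 - A := by linarith
  have h3 : 0 < 3 - A := by linarith
  have h4 : 0 < 4 - A := by linarith
  set R := 1 / (3 - A) with hR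
  have hR_sub : 1 - R = (2 - A) / (3 - A) := by
    rw [hR]
    field_simp
    ring
  have hR_sq_sub : 1 - R ^ 2 = (2 - A) * (4 - A) / (3 - A) ^ 2 := by
    rw [hR]
    field_simp
    ring
  have hR1 : 0 < 1 - R := by rw [hR_sub]; positivity
  have hR2 : 0 < 1 - R ^ 2 := by rw [hR_sq_sub]; positivity
  have hr2 : 0 ≤ r / (1 - r ^ 2) := div_nonneg hr0 (by nlinarith)
  calc r / (1 - r) + 9 / 8 * ((1 - A ^ 2) * (r / (1 - r ^ 2)) ^ 2)
      ≤ R / (1 - R) + 9 / 8 * ((1 - A ^ 2) * (R / (1 - R ^ 2)) ^ 2) := by gcongr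
    _ = 1 / (2 - A) + 9 / 8 * ((1 - A ^ 2) * ((3 - A) / ((2 - A) * (4 - A))) ^ 2) := by
        rw [hR_sub, hR_sq_sub, hR]
        field_simp
    _ ≤ 1 := one_div_two_sub_add_le_one hA1

end Area

namespace IsSchurSeries

variable {φ : ℂ⟦X⟧}

theorem norm_coeff_zero_le_one (hφ : IsSchurSeries φ) : ‖coeff 0 φ‖ ≤ 1 := by
  have h := hφ.norm_coeff_odd_add_sum_le_one 0
  rw [zero_add, sum_range_one] at h
  exact (sq_le_one_iff₀ (norm_nonneg _)).1 ((le_add_of_nonneg_left (norm_nonneg _)).trans h)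

theorem tsum_norm_coeff_add_mul_tsum_sq_le (hφ : IsSchurSeries φ) {r : ℝ} (hr0 : 0 ≤ r)
    (hr1 : r < 1) :
    ∑' n, ‖coeff (n + 1) φ‖ * r ^ (n + 1) + (1 / (1 + ‖coeff 0 φ‖) + r / (1 - r)) *
        ∑' n, ‖coeff (n + 1) φ‖ ^ 2 * r ^ (2 * (n + 1)) ≤
      (1 - ‖coeff 0 φ‖ ^ 2) * (r / (1 - r)) := by
  have hle_one (n : ℕ) : ‖coeff (n + 1) φ‖ ≤ 1 :=
    (hφ.norm_coeff_succ_le n).trans (sub_le_self _ (by positivity))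
  have hsq_sum : Summable fun n => ‖coeff (n + 1) φ‖ ^ 2 * (r ^ 2) ^ n := by
    refine Summable.of_nonneg_of_le (fun n => by positivity) (fun n => ?_)
      (summable_geometric_of_lt_one (sq_nonneg r) (pow_lt_one₀ hr0 hr1 two_ne_zero))
    exact mul_le_of_le_one_left (by positivity) (pow_le_one₀ (norm_nonneg _) (hle_one n))
  exact tsum_mul_pow_add_mul_tsum_le hr0 hr1
    ((summable_nat_add_iff 1).2 (hφ.summable_norm hr0 hr1)) hsq_sum
    hφ.norm_coeff_odd_le hφ.norm_coeff_even_le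

end IsSchurSeries

/-- Theorem 4, second part: for a bounded analytic self-map `f` of the unit
disk with coefficients `a n`, and `0 ≤ r ≤ 1/(3-|a₀|)`:
`|a₀|² + ∑_{n=1}^∞ |aₙ| rⁿ + (1/(1+|a₀|) + r/(1-r)) ∑_{n=1}^∞ |aₙ|² r^{2n}
  + (9/8) ∑_{n=1}^∞ n |aₙ|² r^{2n} ≤ 1`
(the last sum equals `S_r/π`, the area quantity). -/
theorem stmt15 (f : ℂ → ℂ) (a : ℕ → ℂ)
    (hf : DifferentiableOn ℂ f (Metric.ball 0 1))
    (hb : ∀ z ∈ Metric.ball (0 : ℂ) 1, ‖f z‖ ≤ 1)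
    (hs : ∀ z ∈ Metric.ball (0 : ℂ) 1, HasSum (fun n => a n * z ^ n) (f z))
    (r : ℝ) (hr0 : 0 ≤ r) (hr : r ≤ 1 / (3 - ‖a 0‖)) :
    ‖a 0‖ ^ 2 + (∑' n : ℕ, ‖a (n + 1)‖ * r ^ (n + 1))
      + (1 / (1 + ‖a 0‖) + r / (1 - r)) * ∑' n : ℕ, ‖a (n + 1)‖ ^ 2 * r ^ (2 * (n + 1))
      + 9 / 8 * ∑' n : ℕ, (n : ℝ) * ‖a n‖ ^ 2 * r ^ (2 * n)
      ≤ 1 := by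
  have hφ : IsSchurSeries (PowerSeries.mk a) := fun z hz =>
    ⟨f z, hb z (by simpa using hz), by simpa using hs z (by simpa using hz)⟩
  have hA1 : ‖a 0‖ ≤ 1 := by simpa using hφ.norm_coeff_zero_le_one
  have hA2 : 0 ≤ 1 - ‖a 0‖ ^ 2 := by nlinarith [norm_nonneg (a 0)]
  have hr1 : r < 1 := hr.trans_lt (by rw [div_lt_one] <;> linarith)
  have hseries := hφ.tsum_norm_coeff_add_mul_tsum_sq_le hr0 hr1
  have harea := tsum_coe_mul_sq_mul_pow_le hr0 hr1 (fun n => norm_nonneg (a n))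
    (by simpa using hφ.norm_coeff_succ_le)
  have hradius := mul_le_mul_of_nonneg_left
    (div_one_sub_add_le_one (norm_nonneg (a 0)) hA1 hr0 hr) hA2
  simp only [coeff_mk] at hseries
  linarith
end

section
/- Suppose |a_0| ≤ 4√2 - 5. Then for every z ∈ 𝔻 with |z| = r ≤ 1/3: ∑_{n=0}^∞ |a_n| r^n + (1/(1+|a_0|) + r/(1-r)) · ∑_{n=1}^∞ |a_n|² r^{2n} + |f(z) - a_0|² ≤ 1. -/
/-!
Multiplication by an analytic function bounded by `1` is a contraction of the Hardy space `H²`, so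
the lower triangular Toeplitz matrices of the coefficients `aₙ` are contractions. Testing them on
the coefficients of `1 + ω ∑ₖ wₖ conj(aₖ) X ^ (N - k)`, with `ω` the phase of `a_N`, gives
`∑_{k ≤ n} |aₖ|² + |a_{2n+1}| ≤ 1` and `∑_{k < n} |aₖ|² + |aₙ|² / (1 + |a₀|) + |a_{2n}| ≤ 1`.
Multiplying these by powers of `r` and adding them up bounds the two series, without the term
`|a₀|`, by `r (1 - |a₀|²) / (1 - r) ≤ (1 - |a₀|²) / 2`. By Schwarz–Pick,
`|f z - a₀| ≤ (1 - |a₀|²) / (3 - |a₀|)`, which is at most `(1 - |a₀|) / √2` exactly when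
`|a₀| ≤ 4√2 - 5`, and `A + (1 - A²) / 2 + (1 - A)² / 2 = 1`.
-/

open Finset Filter MeasureTheory Metric
open scoped ComplexConjugate Topology

section Parseval

theorem hasSum_norm_sq_of_orthonormal {𝕜 E ι : Type*} [RCLike 𝕜] [SeminormedAddCommGroup E]
    [InnerProductSpace 𝕜 E] {v : ι → E} (hv : Orthonormal 𝕜 v) {c : ι → 𝕜} {x : E}
    (h : HasSum (fun i => c i • v i) x) : HasSum (fun i => ‖c i‖ ^ 2) (‖x‖ ^ 2) :=
  (h.norm.pow 2).congr fun s => by simpa using hv.orthogonalFamily.norm_sum c s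

/-- The boundary function `x ↦ ∑ cₙ exp (2πinx)` of the power series with coefficients `c`. The sum
is taken in the Banach space of continuous functions, so it is `0` if it does not converge there. -/
noncomputable def boundarySeries (c : ℕ → ℂ) : C(UnitAddCircle, ℂ) :=
  ∑' n : ℕ, c n • fourier (n : ℤ)

variable {c d : ℕ → ℂ}

theorem hasSum_boundarySeries (hc : Summable fun n => ‖c n‖) :
    HasSum (fun n : ℕ => c n • fourier (n : ℤ)) (boundarySeries c) :=
  Summable.hasSum <| .of_norm <| hc.congr fun n => by rw [norm_smul, fourier_norm, mul_one]

theorem boundarySeries_apply (hc : Summable fun n => ‖c n‖) (x : UnitAddCircle) :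
    boundarySeries c x = ∑' n, c n * (x.toCircle : ℂ) ^ n := by
  refine (ContinuousMap.hasSum_apply (hasSum_boundarySeries hc) x).tsum_eq.symm.trans ?_
  simp [fourier_apply, AddCircle.toCircle_nsmul]

theorem hasSum_norm_sq_boundarySeries (hc : Summable fun n => ‖c n‖) :
    HasSum (fun n => ‖c n‖ ^ 2)
      (‖ContinuousMap.toLp 2 AddCircle.haarAddCircle ℂ (boundarySeries c)‖ ^ 2) := by
  refine hasSum_norm_sq_of_orthonormal (𝕜 := ℂ) (v := fun n : ℕ => fourierLp 2 (n : ℤ))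
    (orthonormal_fourier.comp _ Nat.cast_injective) ?_
  simpa using (hasSum_boundarySeries hc).mapL (ContinuousMap.toLp 2 AddCircle.haarAddCircle ℂ)

theorem tsum_norm_sq_le_of_norm_tsum_mul_pow_le (hc : Summable fun n => ‖c n‖)
    (hd : Summable fun n => ‖d n‖)
    (h : ∀ z : ℂ, ‖z‖ = 1 → ‖∑' n, c n * z ^ n‖ ≤ ‖∑' n, d n * z ^ n‖) :
    ∑' n, ‖c n‖ ^ 2 ≤ ∑' n, ‖d n‖ ^ 2 := by
  rw [(hasSum_norm_sq_boundarySeries hc).tsum_eq, (hasSum_norm_sq_boundarySeries hd).tsum_eq]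
  gcongr
  refine Lp.norm_le_norm_of_ae_le ?_
  filter_upwards [ContinuousMap.coeFn_toLp (p := 2) (𝕜 := ℂ) AddCircle.haarAddCircle
      (boundarySeries c), ContinuousMap.coeFn_toLp (p := 2) (𝕜 := ℂ) AddCircle.haarAddCircle
      (boundarySeries d)] with x hcx hdx
  rw [hcx, hdx, boundarySeries_apply hc, boundarySeries_apply hd]
  exact h x.toCircle (Circle.norm_coe _)

end Parseval

section Contraction

theorem tsum_norm_sq_cauchyProduct_le {a b : ℕ → ℂ} (ha : Summable fun n => ‖a n‖)
    (hb : Summable fun n => ‖b n‖) (h : ∀ z : ℂ, ‖z‖ = 1 → ‖∑' n, a n * z ^ n‖ ≤ 1) :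
    ∑' k, ‖∑ j ∈ range (k + 1), a j * b (k - j)‖ ^ 2 ≤ ∑' k, ‖b k‖ ^ 2 := by
  refine tsum_norm_sq_le_of_norm_tsum_mul_pow_le
    (summable_norm_sum_mul_range_of_summable_norm ha hb) hb fun z hz => ?_
  have summable_mul_pow {c : ℕ → ℂ} (hc : Summable fun n => ‖c n‖) :
      Summable fun n => ‖c n * z ^ n‖ := by simpa [hz] using hc
  have cauchyProduct_mul_pow (k : ℕ) :
      (∑ j ∈ range (k + 1), a j * b (k - j)) * z ^ k =
        ∑ j ∈ range (k + 1), a j * z ^ j * (b (k - j) * z ^ (k - j)) := by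
    rw [sum_mul]
    refine sum_congr rfl fun j hj => ?_
    rw [← pow_mul_pow_sub z (mem_range_succ_iff.1 hj)]
    ring
  simp_rw [cauchyProduct_mul_pow]
  rw [← tsum_mul_tsum_eq_tsum_sum_range_of_summable_norm (summable_mul_pow ha)
    (summable_mul_pow hb), norm_mul]
  exact mul_le_of_le_one_left (norm_nonneg _) (h z hz)

theorem sum_norm_sq_cauchyProduct_le_of_summable {a : ℕ → ℂ} (ha : Summable fun n => ‖a n‖)
    (h : ∀ z : ℂ, ‖z‖ = 1 → ‖∑' n, a n * z ^ n‖ ≤ 1) (b : ℕ → ℂ) (N : ℕ) :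
    ∑ k ∈ range N, ‖∑ j ∈ range (k + 1), a j * b (k - j)‖ ^ 2 ≤ ∑ k ∈ range N, ‖b k‖ ^ 2 := by
  let b' : ℕ → ℂ := fun k => if k < N then b k else 0
  have hb' {k : ℕ} (hk : k < N) : b' k = b k := if_pos hk
  have hb'_zero : ∀ k ∉ range N, b' k = 0 := fun k hk => if_neg (by simpa using hk)
  have hb'_sum : Summable fun k => ‖b' k‖ :=
    summable_of_ne_finset_zero fun k hk => by rw [hb'_zero k hk, norm_zero]
  have hprod : Summable fun k => ‖∑ j ∈ range (k + 1), a j * b' (k - j)‖ ^ 2 :=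
    (hasSum_norm_sq_boundarySeries
      (summable_norm_sum_mul_range_of_summable_norm ha hb'_sum)).summable
  calc ∑ k ∈ range N, ‖∑ j ∈ range (k + 1), a j * b (k - j)‖ ^ 2
      = ∑ k ∈ range N, ‖∑ j ∈ range (k + 1), a j * b' (k - j)‖ ^ 2 :=
        sum_congr rfl fun k hk => by
          congr 2
          exact sum_congr rfl fun j _ => by
            rw [hb' ((Nat.sub_le k j).trans_lt (mem_range.1 hk))]
    _ ≤ ∑' k, ‖∑ j ∈ range (k + 1), a j * b' (k - j)‖ ^ 2 :=
        hprod.sum_le_tsum _ fun k _ => by positivity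
    _ ≤ ∑' k, ‖b' k‖ ^ 2 := tsum_norm_sq_cauchyProduct_le ha hb'_sum h
    _ = ∑ k ∈ range N, ‖b' k‖ ^ 2 :=
        tsum_eq_sum fun k hk => by rw [hb'_zero k hk, norm_zero, zero_pow two_ne_zero]
    _ = ∑ k ∈ range N, ‖b k‖ ^ 2 := sum_congr rfl fun k hk => by rw [hb' (mem_range.1 hk)]

end Contraction

section Coefficients

-- The factor `s = (1 + ‖y‖)⁻¹` solves `1 - s * ‖y‖ = s`.
theorem inv_one_add_norm_mul_norm_le (x y : ℂ) {ω : ℂ} (hω : ‖ω‖ = 1) :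
    (1 + ‖y‖)⁻¹ * ‖x‖ ≤ ‖x + y * (ω * ((1 + ‖y‖)⁻¹ : ℝ) * conj x)‖ := by
  have hs0 : 0 ≤ (1 + ‖y‖)⁻¹ := by positivity
  calc (1 + ‖y‖)⁻¹ * ‖x‖ = ‖x‖ - ‖y * (ω * ((1 + ‖y‖)⁻¹ : ℝ) * conj x)‖ := by
        simp only [norm_mul, hω, one_mul, Complex.norm_conj, Complex.norm_real,
          Real.norm_of_nonneg hs0]
        field_simp
        ring
    _ ≤ ‖x + y * (ω * ((1 + ‖y‖)⁻¹ : ℝ) * conj x)‖ := norm_sub_le_norm_add _ _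

variable {f : ℂ → ℂ} {a : ℕ → ℂ} (hb : ∀ z ∈ ball (0 : ℂ) 1, ‖f z‖ ≤ 1)
  (hs : ∀ z ∈ ball (0 : ℂ) 1, HasSum (fun n => a n * z ^ n) (f z))

include hs in
theorem summable_norm_mul_pow {r : ℝ} (hr0 : 0 ≤ r) (hr1 : r < 1) :
    Summable fun n => ‖a n‖ * r ^ n := by
  have hr : (r : ℂ) ∈ ball (0 : ℂ) 1 := by simpa [abs_of_nonneg hr0] using hr1
  simpa [abs_of_nonneg hr0] using (hs r hr).summable.norm

include hb hs

theorem sum_norm_sq_cauchyProduct_le_of_norm_le_one (b : ℕ → ℂ) (N : ℕ) :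
    ∑ k ∈ range N, ‖∑ j ∈ range (k + 1), a j * b (k - j)‖ ^ 2 ≤ ∑ k ∈ range N, ‖b k‖ ^ 2 := by
  let F : ℝ → ℝ := fun ρ =>
    ∑ k ∈ range N, ‖∑ j ∈ range (k + 1), a j * (ρ : ℂ) ^ j * b (k - j)‖ ^ 2
  have hF : Continuous F := by fun_prop
  have hF_one : Tendsto F (𝓝[<] 1)
      (𝓝 (∑ k ∈ range N, ‖∑ j ∈ range (k + 1), a j * b (k - j)‖ ^ 2)) := by
    simpa [F] using (hF.tendsto 1).mono_left nhdsWithin_le_nhds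
  refine le_of_tendsto hF_one ?_
  filter_upwards [Ioo_mem_nhdsLT (zero_lt_one' ℝ)] with ρ ⟨hρ0, hρ1⟩
  refine sum_norm_sq_cauchyProduct_le_of_summable ?_ (fun z hz => ?_) b N
  · simpa [abs_of_pos hρ0] using summable_norm_mul_pow hs hρ0.le hρ1
  · have hρz : (ρ : ℂ) * z ∈ ball (0 : ℂ) 1 := by simpa [abs_of_pos hρ0, hz] using hρ1
    simpa only [mul_assoc, ← mul_pow, (hs _ hρz).tsum_eq] using hb _ hρz

-- The contraction applied to `b = (1, β (N - 1), …, β 0)`.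
theorem sum_norm_sq_add_norm_sq_le (β : ℕ → ℂ) (N : ℕ) :
    ∑ k ∈ range N, ‖a k + ∑ j ∈ range k, a j * β (N - (k - j))‖ ^ 2 +
        ‖a N + ∑ j ∈ range N, a j * β j‖ ^ 2 ≤ 1 + ∑ j ∈ range N, ‖β j‖ ^ 2 := by
  let b : ℕ → ℂ := fun j => if j = 0 then 1 else β (N - j)
  have hb_sub {j k : ℕ} (hj : j ∈ range k) : b (k - j) = β (N - (k - j)) :=
    if_neg (Nat.sub_ne_zero_of_lt (mem_range.1 hj))
  have cauchyProduct_eq (k : ℕ) :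
      ∑ j ∈ range (k + 1), a j * b (k - j) = a k + ∑ j ∈ range k, a j * β (N - (k - j)) := by
    rw [sum_range_succ, add_comm, sum_congr rfl fun j hj => by rw [hb_sub hj]]
    simp [b]
  have sub_sub_eq {j : ℕ} (hj : j ∈ range N) : N - (N - j) = j :=
    Nat.sub_sub_self (mem_range.1 hj).le
  have hsum : ∑ k ∈ range (N + 1), ‖b k‖ ^ 2 = 1 + ∑ j ∈ range N, ‖β j‖ ^ 2 := by
    rw [← sum_range_reflect, sum_range_succ, add_comm]
    simp only [add_tsub_cancel_right]
    congr 1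
    · simp [b]
    · exact sum_congr rfl fun j hj => by rw [hb_sub hj, sub_sub_eq hj]
  have key := sum_norm_sq_cauchyProduct_le_of_norm_le_one hb hs b (N + 1)
  simp only [hsum, cauchyProduct_eq, sum_range_succ _ N] at key
  rwa [sum_congr (f := fun j => a j * β (N - (N - j))) rfl
    fun j hj => by rw [sub_sub_eq hj]] at key

theorem exists_norm_eq_one_sum_norm_sq_add_sq_le {w : ℕ → ℝ} {m N : ℕ} (hmN : m ≤ N)
    (hw : ∀ j, 0 ≤ w j) (hwm : ∀ j, m ≤ j → w j = 0) :
    ∃ ω : ℂ, ‖ω‖ = 1 ∧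
      ∑ k ∈ range m,
          ‖a k + ∑ j ∈ range k, a j * (ω * w (N - (k - j)) * conj (a (N - (k - j))))‖ ^ 2 +
        (‖a N‖ + ∑ j ∈ range m, w j * ‖a j‖ ^ 2) ^ 2 ≤ 1 + ∑ j ∈ range m, (w j * ‖a j‖) ^ 2 := by
  obtain ⟨ω, hω, hωN⟩ := Complex.exists_norm_mul_eq_self (a N)
  refine ⟨ω, hω, ?_⟩
  have key := sum_norm_sq_add_norm_sq_le hb hs (fun j => ω * w j * conj (a j)) N
  have hsum_nonneg : 0 ≤ ∑ j ∈ range m, w j * ‖a j‖ ^ 2 :=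
    sum_nonneg fun j _ => mul_nonneg (hw j) (sq_nonneg _)
  have htop : ‖a N + ∑ j ∈ range N, a j * (ω * w j * conj (a j))‖ =
      ‖a N‖ + ∑ j ∈ range m, w j * ‖a j‖ ^ 2 := by
    have haligned : a N + ∑ j ∈ range N, a j * (ω * w j * conj (a j)) =
        ω * ((‖a N‖ + ∑ j ∈ range m, w j * ‖a j‖ ^ 2 : ℝ) : ℂ) := by
      rw [eventually_constant_sum (fun j hj => by simp [hwm j hj]) hmN]
      push_cast
      rw [mul_add, hωN, mul_sum]
      congr 1
      refine sum_congr rfl fun j _ => ?_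
      rw [← Complex.mul_conj']
      ring
    rw [haligned, norm_mul, hω, one_mul, Complex.norm_real, Real.norm_of_nonneg (by positivity)]
  have hβ : ∑ j ∈ range N, ‖ω * w j * conj (a j)‖ ^ 2 = ∑ j ∈ range m, (w j * ‖a j‖) ^ 2 := by
    rw [eventually_constant_sum (fun j hj => by simp [hwm j hj]) hmN]
    simp [hω, abs_of_nonneg (hw _)]
  rw [htop, hβ] at key
  refine le_trans ?_ key
  gcongr

theorem sum_norm_sq_add_norm_odd_coeff_le_one (n : ℕ) :
    ∑ k ∈ range (n + 1), ‖a k‖ ^ 2 + ‖a (2 * n + 1)‖ ≤ 1 := by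
  let w : ℕ → ℝ := fun j => if j ≤ n then 1 else 0
  have hw_one {j : ℕ} (hj : j ∈ range (n + 1)) : w j = 1 := if_pos (mem_range_succ_iff.1 hj)
  have hw_zero {j : ℕ} (hj : n + 1 ≤ j) : w j = 0 := if_neg (by omega)
  obtain ⟨ω, -, key⟩ := exists_norm_eq_one_sum_norm_sq_add_sq_le hb hs (w := w)
    (show n + 1 ≤ 2 * n + 1 by omega) (fun j => by positivity) (fun j => hw_zero)
  set S := ∑ k ∈ range (n + 1), ‖a k‖ ^ 2
  have hlow : ∑ k ∈ range (n + 1), ‖a k + ∑ j ∈ range k, a j *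
      (ω * w (2 * n + 1 - (k - j)) * conj (a (2 * n + 1 - (k - j))))‖ ^ 2 = S := by
    refine sum_congr rfl fun k hk => ?_
    rw [sum_eq_zero, add_zero]
    intro j _
    rw [hw_zero (by have := mem_range.1 hk; omega)]
    simp
  have hw_sum : ∑ j ∈ range (n + 1), w j * ‖a j‖ ^ 2 = S :=
    sum_congr rfl fun j hj => by rw [hw_one hj, one_mul]
  have hw_sq_sum : ∑ j ∈ range (n + 1), (w j * ‖a j‖) ^ 2 = S :=
    sum_congr rfl fun j hj => by rw [hw_one hj, one_mul]
  rw [hlow, hw_sum, hw_sq_sum] at key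
  have hsq : (‖a (2 * n + 1)‖ + S) ^ 2 ≤ 1 := by linarith
  rw [add_comm]
  exact (sq_le_one_iff₀ (by positivity)).1 hsq

theorem sum_norm_sq_add_norm_even_coeff_le_one {n : ℕ} (hn : n ≠ 0) :
    ∑ k ∈ range n, ‖a k‖ ^ 2 + ‖a n‖ ^ 2 / (1 + ‖a 0‖) + ‖a (2 * n)‖ ≤ 1 := by
  let s : ℝ := (1 + ‖a 0‖)⁻¹
  let w : ℕ → ℝ := fun j => if j < n then 1 else if j = n then s else 0
  have hw_one {j : ℕ} (hj : j ∈ range n) : w j = 1 := if_pos (mem_range.1 hj)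
  have hw_mid : w n = s := by simp [w]
  have hw_zero {j : ℕ} (hj : n < j) : w j = 0 := by simp [w, hj.not_gt, hj.ne']
  obtain ⟨ω, hω, key⟩ := exists_norm_eq_one_sum_norm_sq_add_sq_le hb hs (w := w)
    (show n + 1 ≤ 2 * n by omega) (fun j => by positivity) (fun j => hw_zero)
  set S := ∑ k ∈ range n, ‖a k‖ ^ 2
  have hlow : ∀ k ∈ range n, a k + ∑ j ∈ range k, a j *
      (ω * w (2 * n - (k - j)) * conj (a (2 * n - (k - j)))) = a k := fun k hk => by
    rw [sum_eq_zero, add_zero]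
    intro j _
    rw [hw_zero (by have := mem_range.1 hk; omega)]
    simp
  have hmid : ∑ j ∈ range n, a j * (ω * w (2 * n - (n - j)) * conj (a (2 * n - (n - j)))) =
      a 0 * (ω * s * conj (a n)) := by
    rw [sum_eq_single_of_mem 0 (mem_range.2 (Nat.pos_of_ne_zero hn))]
    · rw [show 2 * n - (n - 0) = n by omega, hw_mid]
    · intro j hj hj0
      rw [hw_zero (by have := mem_range.1 hj; omega)]
      simp
  have hmid_le : (s * ‖a n‖) ^ 2 ≤ ‖a n + a 0 * (ω * s * conj (a n))‖ ^ 2 := by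
    gcongr
    exact inv_one_add_norm_mul_norm_le (a n) (a 0) hω
  have hw_sum : ∑ j ∈ range n, w j * ‖a j‖ ^ 2 = S :=
    sum_congr rfl fun j hj => by rw [hw_one hj, one_mul]
  have hw_sq_sum : ∑ j ∈ range n, (w j * ‖a j‖) ^ 2 = S :=
    sum_congr rfl fun j hj => by rw [hw_one hj, one_mul]
  rw [sum_range_succ, sum_congr rfl fun k hk => by rw [hlow k hk], sum_range_succ,
    sum_range_succ, hmid, hw_sum, hw_sq_sum, hw_mid] at key
  have hsq : (‖a (2 * n)‖ + (S + s * ‖a n‖ ^ 2)) ^ 2 ≤ 1 := by linarith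
  rw [div_eq_inv_mul, add_comm]
  exact (sq_le_one_iff₀ (by positivity)).1 hsq

theorem norm_coeff_le_one (n : ℕ) : ‖a n‖ ≤ 1 := by
  have h := sum_norm_sq_add_norm_odd_coeff_le_one hb hs n
  rw [sum_range_succ] at h
  have hlow : 0 ≤ ∑ k ∈ range n, ‖a k‖ ^ 2 := by positivity
  exact (sq_le_one_iff₀ (norm_nonneg _)).1 (by linarith [norm_nonneg (a (2 * n + 1))])

end Coefficients

section BohrSum

theorem sum_mul_pow_add_sum_sq_mul_pow_le {x : ℕ → ℝ} {κ : ℝ}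
    (hodd : ∀ n, ∑ k ∈ range (n + 1), x k ^ 2 + x (2 * n + 1) ≤ 1)
    (heven : ∀ n, n ≠ 0 → ∑ k ∈ range n, x k ^ 2 + κ * x n ^ 2 + x (2 * n) ≤ 1)
    {r : ℝ} (hr0 : 0 ≤ r) (hr1 : r < 1) (N : ℕ) :
    ∑ i ∈ range (2 * N), x (i + 1) * r ^ (i + 1) +
        (κ + r / (1 - r)) * ∑ k ∈ range N, x (k + 1) ^ 2 * r ^ (2 * (k + 1)) ≤
      r / (1 - r) * ((1 - x 0 ^ 2) - r ^ (2 * N) * (1 - ∑ k ∈ range (N + 1), x k ^ 2)) := by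
  have hr : 1 - r ≠ 0 := by linarith
  induction N with
  | zero => simp
  | succ N ih =>
    have h_odd := mul_le_mul_of_nonneg_right (hodd N) (pow_nonneg hr0 (2 * N + 1))
    have h_even := mul_le_mul_of_nonneg_right (heven (N + 1) N.succ_ne_zero)
      (pow_nonneg hr0 (2 * N + 2))
    rw [mul_add_one 2 N, sum_range_succ _ (2 * N + 1), sum_range_succ _ (2 * N),
      sum_range_succ _ N, sum_range_succ _ (N + 1)]
    rw [mul_add_one 2 N] at h_even ⊢
    set S := ∑ k ∈ range (N + 1), x k ^ 2
    have h_increment :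
        r / (1 - r) * ((1 - x 0 ^ 2) - r ^ (2 * N + 2) * (1 - (S + x (N + 1) ^ 2))) =
          r / (1 - r) * ((1 - x 0 ^ 2) - r ^ (2 * N) * (1 - S)) +
            (1 - S) * (r ^ (2 * N + 1) + r ^ (2 * N + 2)) +
            r / (1 - r) * (x (N + 1) ^ 2 * r ^ (2 * N + 2)) := by
      field_simp
      ring
    rw [h_increment]
    linarith

theorem tsum_norm_mul_pow_add_tsum_norm_sq_mul_pow_le {f : ℂ → ℂ} {a : ℕ → ℂ}
    (hb : ∀ z ∈ ball (0 : ℂ) 1, ‖f z‖ ≤ 1)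
    (hs : ∀ z ∈ ball (0 : ℂ) 1, HasSum (fun n => a n * z ^ n) (f z))
    {r : ℝ} (hr0 : 0 ≤ r) (hr1 : r < 1) :
    ∑' n, ‖a (n + 1)‖ * r ^ (n + 1) +
        (1 / (1 + ‖a 0‖) + r / (1 - r)) * ∑' n, ‖a (n + 1)‖ ^ 2 * r ^ (2 * (n + 1)) ≤
      r / (1 - r) * (1 - ‖a 0‖ ^ 2) := by
  have hsum : Summable fun n => ‖a (n + 1)‖ * r ^ (n + 1) :=
    (summable_nat_add_iff (f := fun n => ‖a n‖ * r ^ n) 1).2 (summable_norm_mul_pow hs hr0 hr1)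
  have hsum_sq : Summable fun n => ‖a (n + 1)‖ ^ 2 * r ^ (2 * (n + 1)) := by
    refine hsum.of_nonneg_of_le (fun n => by positivity) fun n => ?_
    have hle_one : ‖a (n + 1)‖ * r ^ (n + 1) ≤ 1 :=
      mul_le_one₀ (norm_coeff_le_one hb hs _) (by positivity) (pow_le_one₀ hr0 hr1.le)
    calc ‖a (n + 1)‖ ^ 2 * r ^ (2 * (n + 1)) = (‖a (n + 1)‖ * r ^ (n + 1)) ^ 2 := by ring
      _ ≤ ‖a (n + 1)‖ * r ^ (n + 1) := pow_le_of_le_one (by positivity) hle_one two_ne_zero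
  have hlim := (hsum.hasSum.tendsto_sum_nat.comp
      (tendsto_id.const_mul_atTop' two_pos : Tendsto (fun N : ℕ => 2 * N) atTop atTop)).add
    (hsum_sq.hasSum.tendsto_sum_nat.const_mul (1 / (1 + ‖a 0‖) + r / (1 - r)))
  refine le_of_tendsto' hlim fun N => ?_
  have hodd := sum_norm_sq_add_norm_odd_coeff_le_one hb hs
  have heven (n : ℕ) (hn : n ≠ 0) :
      ∑ k ∈ range n, ‖a k‖ ^ 2 + 1 / (1 + ‖a 0‖) * ‖a n‖ ^ 2 + ‖a (2 * n)‖ ≤ 1 := by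
    rw [one_div_mul_eq_div]
    exact sum_norm_sq_add_norm_even_coeff_le_one hb hs hn
  refine (sum_mul_pow_add_sum_sq_mul_pow_le hodd heven hr0 hr1 N).trans ?_
  have htail : 0 ≤ r ^ (2 * N) * (1 - ∑ k ∈ range (N + 1), ‖a k‖ ^ 2) :=
    mul_nonneg (by positivity) (by linarith [hodd N, norm_nonneg (a (2 * N + 1))])
  have hr_nonneg : 0 ≤ r / (1 - r) := div_nonneg hr0 (by linarith)
  exact mul_le_mul_of_nonneg_left (sub_le_self _ htail) hr_nonneg

end BohrSum

section SchwarzPick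

theorem norm_one_sub_conj_mul_sq_sub_norm_sub_sq (c w : ℂ) :
    ‖1 - conj c * w‖ ^ 2 - ‖w - c‖ ^ 2 = (1 - ‖c‖ ^ 2) * (1 - ‖w‖ ^ 2) := by
  simp only [← Complex.normSq_eq_norm_sq, Complex.normSq_apply, Complex.sub_re, Complex.sub_im,
    Complex.mul_re, Complex.mul_im, Complex.conj_re, Complex.conj_im, Complex.one_re,
    Complex.one_im]
  ring

theorem norm_sub_le_norm_one_sub_conj_mul {c w : ℂ} (hc : ‖c‖ ≤ 1) (hw : ‖w‖ ≤ 1) :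
    ‖w - c‖ ≤ ‖1 - conj c * w‖ := by
  have hprod : 0 ≤ (1 - ‖c‖ ^ 2) * (1 - ‖w‖ ^ 2) :=
    mul_nonneg (sub_nonneg.2 (pow_le_one₀ (norm_nonneg c) hc))
      (sub_nonneg.2 (pow_le_one₀ (norm_nonneg w) hw))
  rw [← norm_one_sub_conj_mul_sq_sub_norm_sub_sq] at hprod
  exact le_of_sq_le_sq (sub_nonneg.1 hprod) (norm_nonneg _)

theorem one_sub_conj_mul_ne_zero {c w : ℂ} (hc : ‖c‖ < 1) (hw : ‖w‖ ≤ 1) :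
    1 - conj c * w ≠ 0 := fun h => by
  have hlt : ‖conj c * w‖ < 1 := by
    rw [norm_mul, Complex.norm_conj]
    exact mul_lt_one_of_nonneg_of_lt_one_left (norm_nonneg c) hc hw
  rw [← sub_eq_zero.1 h, norm_one] at hlt
  exact hlt.false

theorem norm_sub_mul_one_sub_le_of_norm_le_one {f : ℂ → ℂ} (hf : DifferentiableOn ℂ f (ball 0 1))
    (hb : ∀ z ∈ ball (0 : ℂ) 1, ‖f z‖ ≤ 1) (h0 : ‖f 0‖ < 1) {z : ℂ} (hz : z ∈ ball (0 : ℂ) 1) :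
    ‖f z - f 0‖ * (1 - ‖f 0‖ * ‖z‖) ≤ ‖z‖ * (1 - ‖f 0‖ ^ 2) := by
  have hne (w : ℂ) (hw : w ∈ ball (0 : ℂ) 1) : 1 - conj (f 0) * f w ≠ 0 :=
    one_sub_conj_mul_ne_zero h0 (hb w hw)
  let g : ℂ → ℂ := fun w => (f w - f 0) / (1 - conj (f 0) * f w)
  have hg : DifferentiableOn ℂ g (ball 0 1) :=
    (hf.sub_const _).div ((differentiableOn_const _).sub (hf.const_mul _)) hne
  have hg_maps : Set.MapsTo g (ball 0 1) (closedBall 0 1) := fun w hw => by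
    rw [mem_closedBall_zero_iff, norm_div]
    exact div_le_one_of_le₀ (norm_sub_le_norm_one_sub_conj_mul h0.le (hb w hw)) (norm_nonneg _)
  have hgz : ‖g z‖ ≤ ‖z‖ :=
    Complex.norm_le_norm_of_mapsTo_ball hg hg_maps (by simp [g]) (mem_ball_zero_iff.1 hz)
  have hden : ‖1 - conj (f 0) * f z‖ ≤ 1 - ‖f 0‖ ^ 2 + ‖f 0‖ * ‖f z - f 0‖ :=
    calc ‖1 - conj (f 0) * f z‖ = ‖((1 - ‖f 0‖ ^ 2 : ℝ) : ℂ) - conj (f 0) * (f z - f 0)‖ := by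
          congr 1
          push_cast
          rw [← Complex.conj_mul']
          ring
      _ ≤ ‖((1 - ‖f 0‖ ^ 2 : ℝ) : ℂ)‖ + ‖conj (f 0) * (f z - f 0)‖ := norm_sub_le _ _
      _ = 1 - ‖f 0‖ ^ 2 + ‖f 0‖ * ‖f z - f 0‖ := by
          rw [norm_mul, Complex.norm_conj, Complex.norm_real, Real.norm_of_nonneg
            (sub_nonneg.2 (pow_le_one₀ (norm_nonneg _) h0.le))]
  have hfz : ‖f z - f 0‖ ≤ ‖z‖ * (1 - ‖f 0‖ ^ 2 + ‖f 0‖ * ‖f z - f 0‖) :=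
    calc ‖f z - f 0‖ = ‖g z‖ * ‖1 - conj (f 0) * f z‖ := by
          rw [← norm_mul, div_mul_cancel₀ _ (hne z hz)]
      _ ≤ ‖z‖ * (1 - ‖f 0‖ ^ 2 + ‖f 0‖ * ‖f z - f 0‖) := by gcongr
  linarith

end SchwarzPick

theorem four_mul_sqrt_two_sub_five_lt_one : 4 * √2 - 5 < 1 := by
  have h_sqrt : √2 < 3 / 2 := (Real.sqrt_lt' (by norm_num)).2 (by norm_num)
  linarith

theorem sq_le_of_mul_one_sub_le {A D r : ℝ} (hA0 : 0 ≤ A) (hA : A ≤ 4 * √2 - 5) (hD : 0 ≤ D)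
    (hr : r ≤ 1 / 3) (h : D * (1 - A * r) ≤ r * (1 - A ^ 2)) :
    D ^ 2 ≤ (1 - A) ^ 2 / 2 := by
  have h_sqrt : √2 ^ 2 = 2 := Real.sq_sqrt zero_le_two
  have hA1 : A < 1 := hA.trans_lt four_mul_sqrt_two_sub_five_lt_one
  have hAr : 0 < 1 - A * r := by nlinarith
  have hD_le : D * (3 - A) ≤ 1 - A ^ 2 := by
    refine le_of_mul_le_mul_right ?_ hAr
    calc D * (3 - A) * (1 - A * r) = (3 - A) * (D * (1 - A * r)) := by ring
      _ ≤ (3 - A) * (r * (1 - A ^ 2)) := by gcongr; linarith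
      _ = (1 - A ^ 2) * (3 * r - A * r) := by ring
      _ ≤ (1 - A ^ 2) * (1 - A * r) := by
          gcongr
          · nlinarith
          · linarith
  have hA_sqrt : √2 * (1 + A) ≤ 3 - A := by
    calc √2 * (1 + A) = √2 * (1 + A) + A - A := by ring
      _ ≤ √2 * (1 + (4 * √2 - 5)) + (4 * √2 - 5) - A := by gcongr
      _ = 4 * √2 ^ 2 - 5 - A := by ring
      _ = 3 - A := by rw [h_sqrt]; ring
  have hD_sqrt : D * √2 ≤ 1 - A := by
    refine le_of_mul_le_mul_right ?_ (by linarith : 0 < 1 + A)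
    calc D * √2 * (1 + A) = D * (√2 * (1 + A)) := by ring
      _ ≤ D * (3 - A) := by gcongr
      _ ≤ (1 - A) * (1 + A) := hD_le.trans_eq (by ring)
  have hD_sq : (D * √2) ^ 2 ≤ (1 - A) ^ 2 := by gcongr
  rw [mul_pow, h_sqrt] at hD_sq
  linarith

/-- Theorem 5 (sufficiency): for a bounded analytic self-map `f` of the unit
disk with `|a₀| ≤ 4√2 - 5`, and every `z` with `|z| = r ≤ 1/3`:
`∑_{n=0}^∞ |aₙ| rⁿ + (1/(1+|a₀|) + r/(1-r)) ∑_{n=1}^∞ |aₙ|² r^{2n}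
  + |f(z) - a₀|² ≤ 1`. -/
theorem stmt16 (f : ℂ → ℂ) (a : ℕ → ℂ)
    (hf : DifferentiableOn ℂ f (Metric.ball 0 1))
    (hb : ∀ z ∈ Metric.ball (0 : ℂ) 1, ‖f z‖ ≤ 1)
    (hs : ∀ z ∈ Metric.ball (0 : ℂ) 1, HasSum (fun n => a n * z ^ n) (f z))
    (ha0 : ‖a 0‖ ≤ 4 * Real.sqrt 2 - 5)
    (z : ℂ) (hz : z ∈ Metric.ball (0 : ℂ) 1) (r : ℝ) (hzr : ‖z‖ = r) (hr : r ≤ 1 / 3) :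
    (∑' n : ℕ, ‖a n‖ * r ^ n)
      + (1 / (1 + ‖a 0‖) + r / (1 - r)) * ∑' n : ℕ, ‖a (n + 1)‖ ^ 2 * r ^ (2 * (n + 1))
      + ‖f z - a 0‖ ^ 2
      ≤ 1 := by
  have hr0 : 0 ≤ r := hzr ▸ norm_nonneg z
  have hr1 : r < 1 := by linarith
  have hA0 : 0 ≤ ‖a 0‖ := norm_nonneg _
  have hA1 : ‖a 0‖ < 1 := ha0.trans_lt four_mul_sqrt_two_sub_five_lt_one
  have hf0 : f 0 = a 0 := (hs 0 (mem_ball_self one_pos)).unique <| by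
    simpa using hasSum_single (f := fun n => a n * (0 : ℂ) ^ n) 0 fun n hn => by simp [hn]
  have hseries := tsum_norm_mul_pow_add_tsum_norm_sq_mul_pow_le hb hs hr0 hr1
  have hhalf : r / (1 - r) * (1 - ‖a 0‖ ^ 2) ≤ 1 / 2 * (1 - ‖a 0‖ ^ 2) := by
    refine mul_le_mul_of_nonneg_right ?_ (sub_nonneg.2 (pow_le_one₀ hA0 hA1.le))
    rw [div_le_iff₀ (by linarith)]
    linarith
  have hpick := norm_sub_mul_one_sub_le_of_norm_le_one hf hb (hf0 ▸ hA1) hz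
  rw [hf0, hzr] at hpick
  have hdist := sq_le_of_mul_one_sub_le hA0 ha0 (norm_nonneg _) hr hpick
  rw [(summable_norm_mul_pow hs hr0 hr1).tsum_eq_zero_add, pow_zero, mul_one]
  linarith
end

section
/- Let a be a real number with 4√2 - 5 < a < 1 and let φ_a(z) = (a - z)/(1 - a z), whose power series on 𝔻 is φ_a(z) = a - (1-a²) ∑_{n=1}^∞ a^{n-1} z^n. Then at z = r = 1/3 the refined quantity exceeds 1: a + (1-a²)·r/(1-r) + ((1-a²)·r/(1-ar))² = 1 + (1-a)²(a² + 10a - 7)/(2(3-a)²) > 1; hence the inequality ∑|a_n|r^n + (1/(1+|a_0|)+r/(1-r))∑|a_n|²r^{2n} + |f(z)-a_0|² ≤ 1 for all |z| = r ≤ 1/3 fails for f = φ_a. -/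
/-!
The moduli of the Taylor coefficients of `φ_a` form a geometric progression after the first one, and
the weight `1 / (1 + a) + r / (1 - r)` is tuned to it: the two series add up to the closed form
`a + (1 - a²) r / (1 - r)`, which at `r = 1 / 3` equals `1 - (1 - a)² / 2`. Since
`|φ_a(r) - a| = (1 - a²) r / (1 - a r)`, the extra squared term at `r = 1 / 3` is of the same order
`(1 - a)²`, and for `0 < a < 1` it wins exactly when `(a + 5)² > 32`.
-/

section Series

/-- The refined Bohr sum of a coefficient sequence `c` at radius `r`: the majorant series
`∑ ‖cₙ‖ rⁿ` plus the weighted series `∑ ‖cₙ‖² r²ⁿ` over `n ≥ 1` that refines it. The coefficients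
may lie in any normed group; the sum has junk values unless both series converge and `r ≠ 1`. -/
noncomputable def refinedBohrSum {E : Type*} [Norm E] (c : ℕ → E) (r : ℝ) : ℝ :=
  (∑' n : ℕ, ‖c n‖ * r ^ n)
    + (1 / (1 + ‖c 0‖) + r / (1 - r)) * (∑' n : ℕ, ‖c (n + 1)‖ ^ 2 * r ^ (2 * (n + 1)))

theorem hasSum_const_mul_pow_mul_pow_succ {𝕜 : Type*} [NormedField 𝕜] (k : 𝕜) {q r : 𝕜}
    (hqr : ‖q * r‖ < 1) :
    HasSum (fun n : ℕ => k * q ^ n * r ^ (n + 1)) (k * r / (1 - q * r)) := by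
  rw [div_eq_mul_inv]
  refine ((hasSum_geometric_of_norm_lt_one hqr).mul_left (k * r)).congr_fun fun n => ?_
  ring

variable {E : Type*} [SeminormedAddCommGroup E] {c : ℕ → E} {k q r : ℝ}

theorem tsum_norm_mul_pow_of_norm_succ_eq (hc : ∀ n, ‖c (n + 1)‖ = k * q ^ n)
    (hqr : |q * r| < 1) :
    ∑' n : ℕ, ‖c n‖ * r ^ n = ‖c 0‖ + k * r / (1 - q * r) := by
  have tail : HasSum (fun n : ℕ => ‖c (n + 1)‖ * r ^ (n + 1)) (k * r / (1 - q * r)) := by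
    simpa only [hc] using hasSum_const_mul_pow_mul_pow_succ k hqr
  simpa only [pow_zero, mul_one] using
    (HasSum.zero_add (f := fun n : ℕ => ‖c n‖ * r ^ n) tail).tsum_eq

theorem tsum_norm_succ_sq_mul_pow_of_norm_succ_eq (hc : ∀ n, ‖c (n + 1)‖ = k * q ^ n)
    (hqr : |q * r| < 1) :
    ∑' n : ℕ, ‖c (n + 1)‖ ^ 2 * r ^ (2 * (n + 1)) = (k * r) ^ 2 / (1 - (q * r) ^ 2) := by
  have hsq : ‖q ^ 2 * r ^ 2‖ < 1 := by
    rw [← mul_pow, norm_pow]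
    exact pow_lt_one₀ (norm_nonneg _) hqr two_ne_zero
  have h := (hasSum_const_mul_pow_mul_pow_succ (k ^ 2) hsq).tsum_eq
  rw [mul_pow, mul_pow, ← h]
  refine tsum_congr fun n => ?_
  rw [hc]
  ring

theorem refinedBohrSum_of_norm_succ_eq
    (hc : ∀ n, ‖c (n + 1)‖ = (1 - ‖c 0‖ ^ 2) * ‖c 0‖ ^ n) (hr : |r| < 1) :
    refinedBohrSum c r = ‖c 0‖ + (1 - ‖c 0‖ ^ 2) * r / (1 - r) := by
  have h_norm_le : ‖c 0‖ ≤ 1 := by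
    have h_nonneg : 0 ≤ 1 - ‖c 0‖ ^ 2 := by simpa [hc 0] using norm_nonneg (c 1)
    nlinarith [norm_nonneg (c 0)]
  have h_mul_lt : |‖c 0‖ * r| < 1 := by
    rw [abs_mul, abs_norm]
    exact (mul_le_of_le_one_left (abs_nonneg r) h_norm_le).trans_lt hr
  rw [refinedBohrSum, tsum_norm_mul_pow_of_norm_succ_eq hc h_mul_lt,
    tsum_norm_succ_sq_mul_pow_of_norm_succ_eq hc h_mul_lt]
  obtain ⟨h_gt, h_lt⟩ := abs_lt.mp h_mul_lt
  have h₁ : 1 - r ≠ 0 := (sub_pos.mpr (abs_lt.mp hr).2).ne'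
  have h₂ : 1 - ‖c 0‖ * r ≠ 0 := (sub_pos.mpr h_lt).ne'
  have h₃ : 1 + ‖c 0‖ * r ≠ 0 := by linarith
  have h₄ : 1 + ‖c 0‖ ≠ 0 := by positivity
  have h_weight : 1 / (1 + ‖c 0‖) + r / (1 - r)
      = (1 + ‖c 0‖ * r) / ((1 + ‖c 0‖) * (1 - r)) := by
    field_simp
    ring
  have h_factor : 1 - (‖c 0‖ * r) ^ 2 = (1 - ‖c 0‖ * r) * (1 + ‖c 0‖ * r) := by ring
  have h_refinement : (1 + ‖c 0‖ * r) / ((1 + ‖c 0‖) * (1 - r))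
        * (((1 - ‖c 0‖ ^ 2) * r) ^ 2 / ((1 - ‖c 0‖ * r) * (1 + ‖c 0‖ * r)))
      = (1 - ‖c 0‖ ^ 2) * r / (1 - r) - (1 - ‖c 0‖ ^ 2) * r / (1 - ‖c 0‖ * r) := by
    field_simp
    ring
  rw [h_weight, h_factor, h_refinement]
  ring

end Series

theorem sub_div_one_sub_mul_sub_self {K : Type*} [Field K] {a b z : K} (h : 1 - b * z ≠ 0) :
    (a - z) / (1 - b * z) - a = -((1 - a * b) * z / (1 - b * z)) := by
  rw [div_sub' h, ← neg_div]
  congr 1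
  ring

theorem norm_moebius_sub_self {a r : ℝ} (h : a * r ≠ 1) :
    ‖((a : ℂ) - r) / (1 - a * r) - a‖ = |(1 - a ^ 2) * r / (1 - a * r)| := by
  have h_denom : (1 : ℂ) - a * r ≠ 0 := by exact_mod_cast sub_ne_zero.mpr h.symm
  rw [sub_div_one_sub_mul_sub_self h_denom, norm_neg, ← Real.norm_eq_abs, ← Complex.norm_real]
  push_cast
  ring_nf

theorem refinedBohrSum_add_norm_moebius_sub_sq {a r : ℝ} (ha0 : 0 ≤ a) (ha1 : a ≤ 1) (hr : |r| < 1)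
    {c : ℕ → ℂ} (hc0 : c 0 = a) (hc : ∀ n : ℕ, c (n + 1) = -(((1 - a ^ 2) * a ^ n : ℝ) : ℂ)) :
    refinedBohrSum c r + ‖((a : ℂ) - r) / (1 - a * r) - a‖ ^ 2
      = a + (1 - a ^ 2) * r / (1 - r) + ((1 - a ^ 2) * r / (1 - a * r)) ^ 2 := by
  have h_norm_zero : ‖c 0‖ = a := by rw [hc0, Complex.norm_of_nonneg ha0]
  have h_norm_succ : ∀ n, ‖c (n + 1)‖ = (1 - ‖c 0‖ ^ 2) * ‖c 0‖ ^ n := by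
    intro n
    have h_pos : 0 ≤ 1 - a ^ 2 := by nlinarith
    rw [h_norm_zero, hc, norm_neg, Complex.norm_of_nonneg (by positivity)]
  have h_ne : a * r ≠ 1 := by nlinarith [abs_lt.mp hr]
  rw [refinedBohrSum_of_norm_succ_eq h_norm_succ hr, norm_moebius_sub_self h_ne, sq_abs,
    h_norm_zero]

theorem refined_bohr_value_one_third {a : ℝ} (ha : a ≠ 3) :
    a + (1 - a ^ 2) * (1 / 3) / (1 - 1 / 3)
        + ((1 - a ^ 2) * (1 / 3) / (1 - a * (1 / 3))) ^ 2
      = 1 + (1 - a) ^ 2 * (a ^ 2 + 10 * a - 7) / (2 * (3 - a) ^ 2) := by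
  have h : 3 - a ≠ 0 := sub_ne_zero.mpr ha.symm
  have h_denom : 1 - a * (1 / 3) = (3 - a) / 3 := by ring
  rw [h_denom]
  field_simp
  ring

theorem sq_add_ten_mul_sub_seven_pos {a : ℝ} (ha : 4 * √2 - 5 < a) :
    0 < a ^ 2 + 10 * a - 7 := by
  have h_sq : (4 * √2) ^ 2 < (a + 5) ^ 2 :=
    pow_lt_pow_left₀ (by linarith) (by positivity) two_ne_zero
  rw [mul_pow, Real.sq_sqrt zero_le_two] at h_sq
  linarith

/-- Theorem 5 (necessity): for `4√2 - 5 < a < 1` and the Möbius map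
`φ_a(z) = (a - z)/(1 - a z)` with coefficients `c 0 = a`,
`c (n+1) = -(1-a²)aⁿ`, at `r = 1/3` the refined quantity equals
`1 + (1-a)²(a² + 10a - 7)/(2(3-a)²) > 1`; hence there is a point `z` with
`|z| ≤ 1/3` at which the refined Bohr inequality with the term `|f(z)-a₀|²`
fails for `f = φ_a`. -/
theorem stmt17 (a : ℝ) (ha : 4 * Real.sqrt 2 - 5 < a) (ha1 : a < 1)
    (f : ℂ → ℂ) (hfdef : ∀ z : ℂ, f z = ((a : ℂ) - z) / (1 - (a : ℂ) * z))
    (c : ℕ → ℂ) (hc0 : c 0 = (a : ℂ))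
    (hc : ∀ n : ℕ, c (n + 1) = -(((1 - a ^ 2) * a ^ n : ℝ) : ℂ)) :
    a + (1 - a ^ 2) * (1 / 3) / (1 - 1 / 3)
        + ((1 - a ^ 2) * (1 / 3) / (1 - a * (1 / 3))) ^ 2
      = 1 + (1 - a) ^ 2 * (a ^ 2 + 10 * a - 7) / (2 * (3 - a) ^ 2) ∧
    1 < 1 + (1 - a) ^ 2 * (a ^ 2 + 10 * a - 7) / (2 * (3 - a) ^ 2) ∧
    ∃ z : ℂ, ‖z‖ ≤ 1 / 3 ∧
      1 < (∑' n : ℕ, ‖c n‖ * ‖z‖ ^ n)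
        + (1 / (1 + ‖c 0‖) + ‖z‖ / (1 - ‖z‖))
          * (∑' n : ℕ, ‖c (n + 1)‖ ^ 2 * ‖z‖ ^ (2 * (n + 1)))
        + ‖f z - c 0‖ ^ 2 := by
  have ha0 : 0 ≤ a := by
    have h_sqrt : 5 / 4 < √2 := Real.lt_sqrt_of_sq_lt (by norm_num)
    linarith
  have h_value := refined_bohr_value_one_third (a := a) (by linarith)
  have h_gt : 1 < 1 + (1 - a) ^ 2 * (a ^ 2 + 10 * a - 7) / (2 * (3 - a) ^ 2) := by
    have h_num : 0 < (1 - a) ^ 2 * (a ^ 2 + 10 * a - 7) :=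
      mul_pos (pow_pos (sub_pos.mpr ha1) 2) (sq_add_ten_mul_sub_seven_pos ha)
    have h_denom : 0 < 3 - a := by linarith
    exact lt_add_of_pos_right 1 (div_pos h_num (mul_pos two_pos (pow_pos h_denom 2)))
  have h_norm : ‖((1 / 3 : ℝ) : ℂ)‖ = 1 / 3 := Complex.norm_of_nonneg (by norm_num)
  refine ⟨h_value, h_gt, ((1 / 3 : ℝ) : ℂ), h_norm.le, ?_⟩
  change 1 < refinedBohrSum c ‖((1 / 3 : ℝ) : ℂ)‖ + ‖f ((1 / 3 : ℝ) : ℂ) - c 0‖ ^ 2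
  have h_third : |(1 / 3 : ℝ)| < 1 := by norm_num
  rwa [h_norm, hfdef, hc0, refinedBohrSum_add_norm_moebius_sub_sq ha0 ha1.le h_third hc0 hc,
    h_value]
end

section
/- For every z ∈ 𝔻 with |z| = r ≤ (√17 - 3)/4: |f(z)| + |f'(z)|·r + ∑_{n=2}^∞ |a_n| r^n + (1/(1+|a_0|) + r/(1-r)) · ∑_{n=1}^∞ |a_n|² r^{2n} ≤ 1. Moreover, if r ∈ [0,1) satisfies 1 - 2r - r² - r³ - r⁴ ≥ 0, then for every z with |z| = r: |f(z)|² + |f'(z)|·r + ∑_{n=2}^∞ |a_n| r^n + (1/(1+|a_0|) + r/(1-r)) · ∑_{n=1}^∞ |a_n|² r^{2n} ≤ 1. -/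
/-!
Multiplication by `∑ aₙ ρⁿ zⁿ`, `0 < ρ < 1`, is a contraction of `L²` of the circle whose matrix on
the nonnegative frequencies is Toeplitz. Testing it against suitable vectors and letting `ρ → 1`
gives Carlson's inequalities
`|a₂ₙ| ≤ 1 - ∑_{k<n} |aₖ|² - |aₙ|² / (1 + |a₀|)` and `|a₂ₙ₊₁| ≤ 1 - ∑_{k≤n} |aₖ|²`.
With them the two series telescope: together they are at most `r² / (1 - r) * (1 - |a₀|²)`.
The Schwarz-Pick lemma gives `|f z| ≤ (|a₀| + r) / (1 + |a₀| r)` and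
`|f' z| ≤ (1 - |f z|²) / (1 - r²)`. For the given `r` the resulting bound is increasing in `|f z|`,
so `|f z|` may be taken extremal, and a polynomial inequality in `|a₀|` and `r` is left.
-/

section Contraction

open Finset RCLike
open scoped InnerProductSpace

variable {𝕜 H : Type*} [RCLike 𝕜] [NormedAddCommGroup H] [InnerProductSpace 𝕜 H]

theorem norm_sq_sum_smul_of_orthonormal {ι κ : Type*} {v : κ → H} (hv : Orthonormal 𝕜 v)
    {g : ι → κ} {s : Finset ι} (hg : Set.InjOn g s) (l : ι → 𝕜) :
    ‖∑ i ∈ s, l i • v (g i)‖ ^ 2 = ∑ i ∈ s, ‖l i‖ ^ 2 := by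
  classical
  have h_inner : ⟪∑ i ∈ s, l i • v (g i), ∑ i ∈ s, l i • v (g i)⟫_𝕜 =
      ∑ i ∈ s, (‖l i‖ : 𝕜) ^ 2 := by
    simp_rw [sum_inner, inner_sum, inner_smul_left, inner_smul_right]
    refine sum_congr rfl fun i hi => ?_
    rw [sum_eq_single_of_mem i hi fun j hj hji => ?_]
    · simp [hv.norm_eq_one, RCLike.conj_mul]
    · simp [orthonormal_iff_ite.1 hv, (hg.ne hj hi hji).symm]
  exact_mod_cast (inner_self_eq_norm_sq_to_K (𝕜 := 𝕜) _).symm.trans h_inner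

theorem two_mul_re_inner_apply_le {T : H →L[𝕜] H} (hT : ‖T‖ ≤ 1) (u v : H) :
    2 * re ⟪u, T v⟫_𝕜 ≤ ‖u‖ ^ 2 + ‖v‖ ^ 2 := by
  calc 2 * re ⟪u, T v⟫_𝕜 ≤ 2 * (‖u‖ * ‖T v‖) := by gcongr; exact re_inner_le_norm u (T v)
    _ ≤ 2 * (‖u‖ * ‖v‖) := by gcongr; exact T.le_of_opNorm_le hT v |>.trans_eq (one_mul _)
    _ ≤ ‖u‖ ^ 2 + ‖v‖ ^ 2 := by linarith [two_mul_le_add_sq ‖u‖ ‖v‖]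

theorem two_mul_norm_inner_apply_le {T : H →L[𝕜] H} (hT : ‖T‖ ≤ 1) {p g e q : H}
    (hpg : ⟪p, g⟫_𝕜 = 0) (heq : ⟪e, q⟫_𝕜 = 0) :
    2 * ‖⟪g, T e⟫_𝕜‖ ≤ ‖p‖ ^ 2 + ‖g‖ ^ 2 + ‖e‖ ^ 2 + ‖q‖ ^ 2
      - 2 * re ⟪p, T e⟫_𝕜 - 2 * re ⟪g, T q⟫_𝕜 + 2 * ‖⟪p, T q⟫_𝕜‖ := by
  obtain ⟨c, hc, hce⟩ := exists_norm_eq_mul_self ⟪g, T e⟫_𝕜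
  set η : 𝕜 := starRingEnd 𝕜 c
  have hη : ‖η‖ = 1 := by rw [norm_conj, hc]
  have h_left : ‖p + η • g‖ ^ 2 = ‖p‖ ^ 2 + ‖g‖ ^ 2 := by
    simp [norm_add_sq (𝕜 := 𝕜), inner_smul_right, hpg, norm_smul, hη]
  have h_right : ‖e + η • q‖ ^ 2 = ‖e‖ ^ 2 + ‖q‖ ^ 2 := by
    simp [norm_add_sq (𝕜 := 𝕜), inner_smul_right, heq, norm_smul, hη]
  have h_expand : ⟪p + η • g, T (e + η • q)⟫_𝕜 =
      ⟪p, T e⟫_𝕜 + η * ⟪p, T q⟫_𝕜 + ‖⟪g, T e⟫_𝕜‖ + ⟪g, T q⟫_𝕜 := by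
    have hcη : c * η = 1 := by rw [RCLike.mul_conj, hc]; simp
    simp only [map_add, map_smul, inner_add_left, inner_add_right, inner_smul_left,
      inner_smul_right, hce, η, RCLike.conj_conj] at hcη ⊢
    linear_combination ⟪g, T q⟫_𝕜 * hcη
  have h_cross : -‖⟪p, T q⟫_𝕜‖ ≤ re (η * ⟪p, T q⟫_𝕜) := by
    simpa [hη] using (abs_le.1 (abs_re_le_norm (η * ⟪p, T q⟫_𝕜))).1
  have key := two_mul_re_inner_apply_le hT (p + η • g) (e + η • q)
  rw [h_left, h_right, h_expand] at key
  simp only [map_add, ofReal_re] at key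
  linarith

/-- `T` is a contraction whose restriction to the closed span of the orthonormal sequence `e` is the
lower triangular Toeplitz operator with entries `a (i - j)`, the abstract form of multiplication by
`∑ aₙ zⁿ` on the Hardy space. The matrix is encoded through the images of the vectors `e j`. -/
structure IsToeplitzContraction (T : H →L[𝕜] H) (e : ℕ → H) (a : ℕ → 𝕜) : Prop where
  norm_le_one : ‖T‖ ≤ 1
  orthonormal : Orthonormal 𝕜 e
  hasSum_apply (j : ℕ) : HasSum (fun n => a n • e (n + j)) (T (e j))

namespace IsToeplitzContraction

variable {T : H →L[𝕜] H} {e : ℕ → H} {a : ℕ → 𝕜}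

theorem inner_apply (h : IsToeplitzContraction T e a) (i j : ℕ) :
    ⟪e i, T (e j)⟫_𝕜 = if j ≤ i then a (i - j) else 0 := by
  have h_sum : HasSum (fun n => a n * ⟪e i, e (n + j)⟫_𝕜) ⟪e i, T (e j)⟫_𝕜 := by
    simpa [inner_smul_right] using (h.hasSum_apply j).mapL (innerSL 𝕜 (e i))
  simp only [orthonormal_iff_ite.1 h.orthonormal, mul_ite, mul_one, mul_zero] at h_sum
  refine h_sum.unique ?_
  split_ifs with hij
  · have h_eq (n : ℕ) : i = n + j ↔ n = i - j := by lia
    simpa [h_eq] using hasSum_single (f := fun n => if n = i - j then a n else 0) (i - j)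
      fun n hn => if_neg hn
  · have h_ne (n : ℕ) : i ≠ n + j := by lia
    simpa only [h_ne, if_false] using hasSum_zero

theorem inner_sum_apply_zero (h : IsToeplitzContraction T e a) (s : Finset ℕ) (x : ℕ → 𝕜) :
    ⟪∑ k ∈ s, x k • e k, T (e 0)⟫_𝕜 = ∑ k ∈ s, starRingEnd 𝕜 (x k) * a k := by
  simp [sum_inner, inner_smul_left, h.inner_apply]

theorem inner_apply_sum_reflect (h : IsToeplitzContraction T e a) {m N : ℕ} (hm : m ≤ N + 1)
    (y : ℕ → 𝕜) :
    ⟪e N, T (∑ k ∈ range m, y k • e (N - k))⟫_𝕜 = ∑ k ∈ range m, y k * a k := by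
  simp only [map_sum, map_smul, inner_sum, inner_smul_right, h.inner_apply]
  refine sum_congr rfl fun k hk => ?_
  have hkm := mem_range.1 hk
  rw [if_pos (by lia), show N - (N - k) = k by lia]

theorem inner_sum_apply_sum_reflect (h : IsToeplitzContraction T e a) (n : ℕ) (x y : ℕ → 𝕜) :
    ⟪∑ k ∈ range (n + 1), x k • e k, T (∑ k ∈ range (n + 1), y k • e (2 * n - k))⟫_𝕜 =
      starRingEnd 𝕜 (x n) * y n * a 0 := by
  have h_entry {k l : ℕ} (hk : k ∈ range (n + 1)) (hl : l ∈ range (n + 1))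
      (hkl : k ≠ n ∨ l ≠ n) : ⟪e k, T (e (2 * n - l))⟫_𝕜 = 0 := by
    rw [h.inner_apply, if_neg]
    grind
  have hn : n ∈ range (n + 1) := self_mem_range_succ n
  simp only [map_sum, map_smul, sum_inner, inner_sum, inner_smul_left, inner_smul_right]
  rw [sum_eq_single_of_mem n hn fun l hl hln => by
      rw [sum_eq_zero fun k hk => by rw [h_entry hk hl (.inr hln), mul_zero], mul_zero],
    sum_eq_single_of_mem n hn fun k hk hkn => by rw [h_entry hk hn (.inl hkn), mul_zero],
    h.inner_apply, if_pos (by lia), show n - (2 * n - n) = 0 by lia]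
  ring

theorem norm_coeff_two_mul_le_of_vector (h : IsToeplitzContraction T e a) {n : ℕ} (hn : n ≠ 0)
    (x : ℕ → 𝕜) :
    ‖a (2 * n)‖ ≤ 1 + ∑ k ∈ range (n + 1), ‖x k‖ ^ 2
      - 2 * re (∑ k ∈ range (n + 1), starRingEnd 𝕜 (x k) * a k) + ‖x n‖ ^ 2 * ‖a 0‖ := by
  set p := ∑ k ∈ range (n + 1), x k • e k
  set q := ∑ k ∈ range (n + 1), starRingEnd 𝕜 (x k) • e (2 * n - k)
  have hp : ‖p‖ ^ 2 = ∑ k ∈ range (n + 1), ‖x k‖ ^ 2 :=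
    norm_sq_sum_smul_of_orthonormal h.orthonormal (g := fun k => k) (Set.injOn_id _) x
  have hq : ‖q‖ ^ 2 = ∑ k ∈ range (n + 1), ‖x k‖ ^ 2 := by
    simpa only [norm_conj] using norm_sq_sum_smul_of_orthonormal h.orthonormal
      (g := fun k => 2 * n - k) (s := range (n + 1))
      (fun i hi j hj hij => by simp only [coe_range, Set.mem_Iio] at hi hj; lia)
      (fun k => starRingEnd 𝕜 (x k))
  have hpe : ⟪p, e (2 * n)⟫_𝕜 = 0 := by
    rw [sum_inner]
    refine sum_eq_zero fun k hk => ?_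
    rw [inner_smul_left, h.orthonormal.inner_eq_zero (by grind), mul_zero]
  have heq : ⟪e 0, q⟫_𝕜 = 0 := by
    rw [inner_sum]
    refine sum_eq_zero fun k hk => ?_
    rw [inner_smul_right, h.orthonormal.inner_eq_zero (by grind), mul_zero]
  have key := two_mul_norm_inner_apply_le h.norm_le_one hpe heq
  rw [h.inner_apply, if_pos (Nat.zero_le _), Nat.sub_zero, h.inner_sum_apply_zero,
    h.inner_apply_sum_reflect (by lia), h.inner_sum_apply_sum_reflect, hp, hq,
    h.orthonormal.norm_eq_one, h.orthonormal.norm_eq_one, norm_mul, norm_mul, norm_conj] at key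
  linarith

theorem norm_coeff_two_mul_le (h : IsToeplitzContraction T e a) {n : ℕ} (hn : n ≠ 0) :
    ‖a (2 * n)‖ ≤ 1 - ∑ k ∈ range n, ‖a k‖ ^ 2 - ‖a n‖ ^ 2 / (1 + ‖a 0‖) := by
  -- `t` minimises the coefficient `t² (1 + ‖a 0‖) - 2 t` that `‖a n‖²` acquires below.
  set t : ℝ := (1 + ‖a 0‖)⁻¹ with ht
  have ht_mul : t * (1 + ‖a 0‖) = 1 := inv_mul_cancel₀ (by positivity)
  set x : ℕ → 𝕜 := fun k => if k < n then a k else t * a k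
  have hx_lt {k : ℕ} (hk : k ∈ range n) : x k = a k := if_pos (mem_range.1 hk)
  have hx_n : x n = t * a n := if_neg n.lt_irrefl
  have h_norm : ∑ k ∈ range (n + 1), ‖x k‖ ^ 2 =
      ∑ k ∈ range n, ‖a k‖ ^ 2 + t ^ 2 * ‖a n‖ ^ 2 := by
    rw [sum_range_succ, hx_n, sum_congr rfl fun k hk => by rw [hx_lt hk]]
    simp [mul_pow]
  have h_diag : ∑ k ∈ range (n + 1), starRingEnd 𝕜 (x k) * a k =
      ((∑ k ∈ range n, ‖a k‖ ^ 2 + t * ‖a n‖ ^ 2 : ℝ) : 𝕜) := by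
    rw [sum_range_succ, hx_n, sum_congr rfl fun k hk => by rw [hx_lt hk, RCLike.conj_mul]]
    simp [mul_assoc, RCLike.conj_mul]
  have key := h.norm_coeff_two_mul_le_of_vector hn x
  rw [h_norm, h_diag, ofReal_re, hx_n, norm_mul, norm_ofReal, mul_pow, sq_abs] at key
  rw [div_eq_mul_inv, ← ht]
  linear_combination key + t * ‖a n‖ ^ 2 * ht_mul

end IsToeplitzContraction

end Contraction

section MulOperator

open MeasureTheory ENNReal

variable {X 𝕜 : Type*} [TopologicalSpace X] [CompactSpace X] [MeasurableSpace X] [BorelSpace X]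
  [RCLike 𝕜] (p : ℝ≥0∞) [Fact (1 ≤ p)] (μ : Measure X) [IsFiniteMeasure μ]

/-- The operator `g ↦ F g` on `Lᵖ(μ)` of multiplication by a continuous function `F`, as a
continuous linear function of `F`. It serves to realise a power series as a Toeplitz operator. -/
noncomputable def mulLp : C(X, 𝕜) →L[𝕜] Lp 𝕜 p μ →L[𝕜] Lp 𝕜 p μ :=
  (ContinuousLinearMap.mul 𝕜 𝕜).holderL μ ∞ p p ∘L ContinuousMap.toLp ∞ μ 𝕜

variable {p μ}

theorem mulLp_toLp (F g : C(X, 𝕜)) :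
    mulLp p μ F (ContinuousMap.toLp p μ 𝕜 g) = ContinuousMap.toLp p μ 𝕜 (F * g) := by
  refine Lp.ext ?_
  filter_upwards [(ContinuousLinearMap.mul 𝕜 𝕜).coeFn_holder (r := p)
      (ContinuousMap.toLp ∞ μ 𝕜 F) (ContinuousMap.toLp p μ 𝕜 g),
    ContinuousMap.coeFn_toLp (p := ∞) (𝕜 := 𝕜) μ F, ContinuousMap.coeFn_toLp (p := p) (𝕜 := 𝕜) μ g,
    ContinuousMap.coeFn_toLp (p := p) (𝕜 := 𝕜) μ (F * g)] with x h_mul hF hg hFg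
  refine h_mul.trans ?_
  rw [hF, hg, hFg, ContinuousLinearMap.mul_apply', ContinuousMap.mul_apply]

theorem norm_mulLp_le (F : C(X, 𝕜)) : ‖mulLp p μ F‖ ≤ ‖F‖ := by
  have h_toLp : ‖ContinuousMap.toLp ∞ μ 𝕜 F‖ ≤ ‖F‖ := by
    refine (Lp.norm_le_of_ae_bound (norm_nonneg F) ?_).trans_eq (by simp)
    filter_upwards [ContinuousMap.coeFn_toLp (p := ∞) (𝕜 := 𝕜) μ F] with x hx
    exact hx ▸ F.norm_coe_le_norm x
  calc ‖mulLp p μ F‖ ≤ ‖(ContinuousLinearMap.mul 𝕜 𝕜).holderL μ ∞ p p‖ *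
        ‖ContinuousMap.toLp ∞ μ 𝕜 F‖ :=
      ((ContinuousLinearMap.mul 𝕜 𝕜).holderL μ ∞ p p).le_opNorm (ContinuousMap.toLp ∞ μ 𝕜 F)
    _ ≤ 1 * ‖F‖ := by
      gcongr
      exact ContinuousLinearMap.norm_holderL_le _ |>.trans (ContinuousLinearMap.opNorm_mul_le 𝕜 𝕜)
    _ = ‖F‖ := one_mul _

end MulOperator

section Fourier

open AddCircle

theorem exists_hasSum_smul_fourier_norm_le_one {a : ℕ → ℂ} (ha : Summable fun n => ‖a n‖)
    (h_le : ∀ w : ℂ, ‖w‖ = 1 → ‖∑' n, a n * w ^ n‖ ≤ 1) :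
    ∃ F : C(UnitAddCircle, ℂ), HasSum (fun n : ℕ => a n • fourier (n : ℤ)) F ∧ ‖F‖ ≤ 1 := by
  have h_sum : Summable fun n : ℕ => a n • (fourier (n : ℤ) : C(UnitAddCircle, ℂ)) :=
    .of_norm (by simpa [norm_smul, fourier_norm] using ha)
  refine ⟨_, h_sum.hasSum, (ContinuousMap.norm_le _ zero_le_one).2 fun t => ?_⟩
  rw [← ContinuousMap.tsum_apply h_sum]
  simpa [fourier_apply, toCircle_nsmul] using h_le (toCircle t) (Circle.norm_coe _)

theorem exists_isToeplitzContraction {a : ℕ → ℂ} (ha : Summable fun n => ‖a n‖)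
    (h_le : ∀ w : ℂ, ‖w‖ = 1 → ‖∑' n, a n * w ^ n‖ ≤ 1) :
    ∃ T : MeasureTheory.Lp ℂ 2 (haarAddCircle (T := 1)) →L[ℂ]
        MeasureTheory.Lp ℂ 2 (haarAddCircle (T := 1)),
      IsToeplitzContraction T (fun n : ℕ => fourierLp 2 n) a := by
  obtain ⟨F, hF, hF_le⟩ := exists_hasSum_smul_fourier_norm_le_one ha h_le
  refine ⟨mulLp 2 haarAddCircle F, (norm_mulLp_le F).trans hF_le,
    orthonormal_fourier.comp _ Nat.cast_injective, fun j => ?_⟩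
  have h_mul (n : ℕ) : mulLp 2 haarAddCircle (a n • fourier (n : ℤ)) (fourierLp 2 j) =
      a n • fourierLp (T := 1) 2 (n + j : ℕ) := by
    rw [map_smul, smul_apply, fourierLp, mulLp_toLp]
    congr 2
    ext t
    simp
  simpa only [ContinuousLinearMap.flip_apply, h_mul] using
    hF.mapL ((mulLp (𝕜 := ℂ) 2 haarAddCircle).flip (fourierLp 2 j))

end Fourier

section Carlson

open Finset Metric

variable {f : ℂ → ℂ} {a : ℕ → ℂ}

theorem exists_isToeplitzContraction_of_hasSum_ball (hb : ∀ z ∈ ball (0 : ℂ) 1, ‖f z‖ ≤ 1)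
    (hs : ∀ z ∈ ball (0 : ℂ) 1, HasSum (fun n => a n * z ^ n) (f z)) {ρ : ℂ} (hρ : ‖ρ‖ < 1) :
    ∃ T : MeasureTheory.Lp ℂ 2 (AddCircle.haarAddCircle (T := 1)) →L[ℂ]
        MeasureTheory.Lp ℂ 2 (AddCircle.haarAddCircle (T := 1)),
      IsToeplitzContraction T (fun n : ℕ => fourierLp 2 n) (fun n => a n * ρ ^ n) := by
  refine exists_isToeplitzContraction (hs ρ (by simpa using hρ)).summable.norm fun w hw => ?_
  have hρw : ρ * w ∈ ball (0 : ℂ) 1 := by simpa [hw] using hρ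
  simpa only [← (hs _ hρw).tsum_eq, mul_pow, mul_assoc] using hb _ hρw

theorem norm_coeff_two_mul_le_of_norm_le_one (hb : ∀ z ∈ ball (0 : ℂ) 1, ‖f z‖ ≤ 1)
    (hs : ∀ z ∈ ball (0 : ℂ) 1, HasSum (fun n => a n * z ^ n) (f z)) {n : ℕ} (hn : n ≠ 0) :
    ‖a (2 * n)‖ ≤ 1 - ∑ k ∈ range n, ‖a k‖ ^ 2 - ‖a n‖ ^ 2 / (1 + ‖a 0‖) := by
  have h_dilate {ρ : ℝ} (hρ : ρ ∈ Set.Ioo 0 1) : ‖a (2 * n)‖ * ρ ^ (2 * n) ≤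
      1 - ∑ k ∈ range n, (‖a k‖ * ρ ^ k) ^ 2 - (‖a n‖ * ρ ^ n) ^ 2 / (1 + ‖a 0‖) := by
    have hρ_norm : ‖(ρ : ℂ)‖ = ρ := Complex.norm_of_nonneg hρ.1.le
    obtain ⟨T, hT⟩ := exists_isToeplitzContraction_of_hasSum_ball hb hs (hρ_norm.trans_lt hρ.2)
    simpa only [norm_mul, norm_pow, hρ_norm, pow_zero, mul_one] using hT.norm_coeff_two_mul_le hn
  have h_mem : (1 : ℝ) ∈ closure (Set.Ioo 0 1) := by simp [closure_Ioo zero_ne_one]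
  simpa using le_on_closure (x := (1 : ℝ)) (s := Set.Ioo 0 1) (fun ρ hρ => h_dilate hρ)
    (by fun_prop) (by fun_prop) h_mem

theorem norm_coeff_two_mul_add_one_le_of_norm_le_one (hb : ∀ z ∈ ball (0 : ℂ) 1, ‖f z‖ ≤ 1)
    (hs : ∀ z ∈ ball (0 : ℂ) 1, HasSum (fun n => a n * z ^ n) (f z)) (n : ℕ) :
    ‖a (2 * n + 1)‖ ≤ 1 - ∑ k ∈ range (n + 1), ‖a k‖ ^ 2 := by
  -- Apply the even case to `z ↦ z * f z`, whose coefficients `b` are those of `f` shifted by one.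
  set b : ℕ → ℂ := fun k => k.casesOn 0 a
  have hb' : ∀ z ∈ ball (0 : ℂ) 1, ‖z * f z‖ ≤ 1 := fun z hz => by
    rw [norm_mul]
    exact mul_le_one₀ (mem_ball_zero_iff.1 hz).le (norm_nonneg _) (hb z hz)
  have hs' : ∀ z ∈ ball (0 : ℂ) 1, HasSum (fun k => b k * z ^ k) (z * f z) := fun z hz => by
    rw [← hasSum_nat_add_iff' 1]
    simpa [b, pow_succ', mul_left_comm] using (hs z hz).mul_left z
  have key : ‖a (2 * n + 1)‖ ≤ 1 - ∑ k ∈ range (n + 1), ‖b k‖ ^ 2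
      - ‖a n‖ ^ 2 / (1 + ‖(0 : ℂ)‖) :=
    norm_coeff_two_mul_le_of_norm_le_one hb' hs' n.succ_ne_zero
  rw [sum_range_succ', norm_zero, add_zero, div_one] at key
  calc ‖a (2 * n + 1)‖ ≤ 1 - (∑ k ∈ range n, ‖a k‖ ^ 2 + ‖(0 : ℂ)‖ ^ 2) - ‖a n‖ ^ 2 := key
    _ = 1 - ∑ k ∈ range (n + 1), ‖a k‖ ^ 2 := by rw [sum_range_succ, norm_zero]; ring

end Carlson

section MajorantSeries

open Filter Finset Topology

variable {b : ℕ → ℝ} {r : ℝ}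

theorem majorant_step {s q x y R c : ℝ} (hc : 0 ≤ c) (hr0 : 0 ≤ r) (hr1 : r < 1) (hR : 0 ≤ R)
    (hx : x ≤ s - q / (1 + c)) (hy : y ≤ s - q) :
    x * R + y * (r * R) + (1 / (1 + c) + r / (1 - r)) * (q * R)
      + r ^ 2 * R / (1 - r) * (s - q) ≤ R / (1 - r) * s := by
  have hr : 0 < 1 - r := by linarith
  calc _ ≤ (s - q / (1 + c)) * R + (s - q) * (r * R)
        + (1 / (1 + c) + r / (1 - r)) * (q * R) + r ^ 2 * R / (1 - r) * (s - q) := by gcongr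
    _ = R / (1 - r) * s := by field_simp; ring

theorem sum_majorant_add_remainder_le (hb0 : 0 ≤ b 0) (hr0 : 0 ≤ r) (hr1 : r < 1)
    (h_even : ∀ n ≠ 0, b (2 * n) ≤ 1 - ∑ k ∈ range n, b k ^ 2 - b n ^ 2 / (1 + b 0))
    (h_odd : ∀ n, b (2 * n + 1) ≤ 1 - ∑ k ∈ range (n + 1), b k ^ 2) (K : ℕ) :
    ∑ n ∈ range (2 * K), b (n + 2) * r ^ (n + 2)
      + (1 / (1 + b 0) + r / (1 - r)) * ∑ n ∈ range K, b (n + 1) ^ 2 * r ^ (2 * (n + 1))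
      + r ^ (2 * K + 2) / (1 - r) * (1 - ∑ k ∈ range (K + 1), b k ^ 2)
      ≤ r ^ 2 / (1 - r) * (1 - b 0 ^ 2) := by
  induction K with
  | zero => simp
  | succ K ih =>
    have h_step := majorant_step hb0 hr0 hr1 (by positivity : 0 ≤ r ^ (2 * K + 2))
      (h_even (K + 1) K.succ_ne_zero)
      ((h_odd (K + 1)).trans_eq (by rw [sum_range_succ _ (K + 1), ← sub_sub]))
    rw [show 2 * (K + 1) = 2 * K + 1 + 1 by ring] at h_step ⊢
    rw [sum_range_succ _ (2 * K + 1), sum_range_succ _ (2 * K), sum_range_succ _ K,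
      sum_range_succ _ (K + 1)]
    linear_combination ih + h_step

theorem sum_sq_le_one (hb : ∀ n, 0 ≤ b n)
    (h_odd : ∀ n, b (2 * n + 1) ≤ 1 - ∑ k ∈ range (n + 1), b k ^ 2) (n : ℕ) :
    ∑ k ∈ range n, b k ^ 2 ≤ 1 := by
  linarith [hb (2 * n + 1), h_odd n, sum_range_succ (fun k => b k ^ 2) n, sq_nonneg (b n)]

theorem tsum_majorant_le (hb : ∀ n, 0 ≤ b n) (hr0 : 0 ≤ r) (hr1 : r < 1)
    (h_sum : Summable fun n => b n * r ^ n)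
    (h_even : ∀ n ≠ 0, b (2 * n) ≤ 1 - ∑ k ∈ range n, b k ^ 2 - b n ^ 2 / (1 + b 0))
    (h_odd : ∀ n, b (2 * n + 1) ≤ 1 - ∑ k ∈ range (n + 1), b k ^ 2) :
    ∑' n, b (n + 2) * r ^ (n + 2)
      + (1 / (1 + b 0) + r / (1 - r)) * ∑' n, b (n + 1) ^ 2 * r ^ (2 * (n + 1))
      ≤ r ^ 2 / (1 - r) * (1 - b 0 ^ 2) := by
  have h_summable_sq : Summable fun n => b n ^ 2 :=
    summable_of_sum_range_le (fun n => sq_nonneg _) (sum_sq_le_one hb h_odd)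
  have h_tendsto_sq : Tendsto (fun K => ∑ n ∈ range K, b (n + 1) ^ 2 * r ^ (2 * (n + 1))) atTop
      (𝓝 (∑' n, b (n + 1) ^ 2 * r ^ (2 * (n + 1)))) := by
    refine (Summable.of_nonneg_of_le (fun n => by positivity) (fun n => ?_)
      ((summable_nat_add_iff 1).2 h_summable_sq)).hasSum.tendsto_sum_nat
    exact mul_le_of_le_one_right (sq_nonneg _) (pow_le_one₀ hr0 hr1.le)
  have h_tendsto : Tendsto (fun K => ∑ n ∈ range (2 * K), b (n + 2) * r ^ (n + 2)) atTop
      (𝓝 (∑' n, b (n + 2) * r ^ (n + 2))) :=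
    ((summable_nat_add_iff 2).2 h_sum).hasSum.tendsto_sum_nat.comp
      (tendsto_id.const_mul_atTop' two_pos)
  refine le_of_tendsto' (h_tendsto.add (h_tendsto_sq.const_mul _)) fun K => ?_
  have h_rem : 0 ≤ r ^ (2 * K + 2) / (1 - r) * (1 - ∑ k ∈ range (K + 1), b k ^ 2) :=
    mul_nonneg (div_nonneg (by positivity) (by linarith)) (sub_nonneg.2 (sum_sq_le_one hb h_odd _))
  linarith [sum_majorant_add_remainder_le (hb 0) hr0 hr1 h_even h_odd K]

end MajorantSeries

section Coefficients

open Metric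

variable {f : ℂ → ℂ} {a : ℕ → ℂ} {z : ℂ}

theorem coeff_zero_eq (hs : ∀ z ∈ ball (0 : ℂ) 1, HasSum (fun n => a n * z ^ n) (f z)) :
    a 0 = f 0 := by
  simpa using (hasSum_single (f := fun n => a n * (0 : ℂ) ^ n) 0 fun n hn => by simp [hn]).unique
    (hs 0 (mem_ball_self one_pos))

theorem tsum_norm_coeff_majorant_le (hb : ∀ z ∈ ball (0 : ℂ) 1, ‖f z‖ ≤ 1)
    (hs : ∀ z ∈ ball (0 : ℂ) 1, HasSum (fun n => a n * z ^ n) (f z)) (hz : z ∈ ball 0 1) :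
    ∑' n, ‖a (n + 2)‖ * ‖z‖ ^ (n + 2)
      + (1 / (1 + ‖a 0‖) + ‖z‖ / (1 - ‖z‖)) * ∑' n, ‖a (n + 1)‖ ^ 2 * ‖z‖ ^ (2 * (n + 1))
      ≤ ‖z‖ ^ 2 / (1 - ‖z‖) * (1 - ‖a 0‖ ^ 2) :=
  tsum_majorant_le (b := fun n => ‖a n‖) (fun n => norm_nonneg (a n)) (norm_nonneg z)
    (mem_ball_zero_iff.1 hz) (by simpa only [norm_mul, norm_pow] using (hs z hz).summable.norm)
    (fun _ hn => norm_coeff_two_mul_le_of_norm_le_one hb hs hn)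
    (norm_coeff_two_mul_add_one_le_of_norm_le_one hb hs)

end Coefficients

section SchwarzPick

open Metric Set Filter Topology ComplexConjugate

variable {f : ℂ → ℂ} {b u w z : ℂ}

/-- The Möbius transformation of the unit disc that sends `b` to `0`, used to move the Schwarz
lemma away from the origin. -/
noncomputable def diskMobius (b u : ℂ) : ℂ := (u - b) / (1 - conj b * u)

theorem norm_sq_one_sub_conj_mul (b u : ℂ) :
    ‖1 - conj b * u‖ ^ 2 = ‖u - b‖ ^ 2 + (1 - ‖b‖ ^ 2) * (1 - ‖u‖ ^ 2) := by
  simp only [Complex.sq_norm, Complex.normSq_apply, Complex.sub_re, Complex.sub_im, Complex.mul_re,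
    Complex.mul_im, Complex.conj_re, Complex.conj_im, Complex.one_re, Complex.one_im]
  ring

theorem one_sub_conj_mul_ne_zero_s19 (hb : ‖b‖ < 1) (hu : ‖u‖ < 1) : 1 - conj b * u ≠ 0 := by
  refine sub_ne_zero.2 fun h => ?_
  have h_lt : ‖conj b * u‖ < 1 := by
    rw [norm_mul, RCLike.norm_conj]
    exact mul_lt_one_of_nonneg_of_lt_one_left (norm_nonneg b) hb hu.le
  simp [← h] at h_lt

theorem norm_diskMobius_lt_one (hb : ‖b‖ < 1) (hu : ‖u‖ < 1) : ‖diskMobius b u‖ < 1 := by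
  rw [diskMobius, norm_div, div_lt_one (norm_pos_iff.2 (one_sub_conj_mul_ne_zero_s19 hb hu))]
  refine lt_of_pow_lt_pow_left₀ 2 (norm_nonneg _) ?_
  rw [norm_sq_one_sub_conj_mul]
  have hb2 : ‖b‖ ^ 2 < 1 := pow_lt_one₀ (norm_nonneg b) hb two_ne_zero
  have hu2 : ‖u‖ ^ 2 < 1 := pow_lt_one₀ (norm_nonneg u) hu two_ne_zero
  nlinarith

theorem mapsTo_diskMobius (hb : ‖b‖ < 1) : MapsTo (diskMobius b) (ball 0 1) (ball 0 1) :=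
  fun _ hu => mem_ball_zero_iff.2 (norm_diskMobius_lt_one hb (mem_ball_zero_iff.1 hu))

theorem differentiableOn_diskMobius (hb : ‖b‖ < 1) :
    DifferentiableOn ℂ (diskMobius b) (ball 0 1) :=
  (differentiableOn_id.sub_const b).div ((differentiableOn_id.const_mul _).const_sub 1)
    fun _ hu => one_sub_conj_mul_ne_zero_s19 hb (mem_ball_zero_iff.1 hu)

theorem diskMobius_neg_diskMobius (hb : ‖b‖ < 1) (hu : ‖u‖ < 1) :
    diskMobius (-b) (diskMobius b u) = u := by
  have hbu := one_sub_conj_mul_ne_zero_s19 hb hu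
  have hbb := one_sub_conj_mul_ne_zero_s19 hb hb
  have h_num : diskMobius b u + b = u * (1 - conj b * b) / (1 - conj b * u) := by
    rw [diskMobius, div_add' _ _ _ hbu]; congr 1; ring
  have h_den : 1 + conj b * diskMobius b u = (1 - conj b * b) / (1 - conj b * u) := by
    rw [diskMobius, mul_div_assoc', add_div' _ _ _ hbu]; congr 1; ring
  rw [diskMobius, map_neg, sub_neg_eq_add, neg_mul, sub_neg_eq_add, h_num, h_den,
    div_div_div_cancel_right₀ hbu, mul_div_cancel_right₀ _ hbb]

theorem norm_diskMobius_le_of_mapsTo_ball (hf : DifferentiableOn ℂ f (ball 0 1))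
    (h_maps : MapsTo f (ball 0 1) (ball 0 1)) (hw : w ∈ ball 0 1) (hz : z ∈ ball 0 1) :
    ‖diskMobius (f w) (f z)‖ ≤ ‖diskMobius w z‖ := by
  have hw' : ‖w‖ < 1 := mem_ball_zero_iff.1 hw
  have hz' : ‖z‖ < 1 := mem_ball_zero_iff.1 hz
  have h_neg : ‖-w‖ < 1 := by rwa [norm_neg]
  have hfw : ‖f w‖ < 1 := mem_ball_zero_iff.1 (h_maps hw)
  set g : ℂ → ℂ := diskMobius (f w) ∘ f ∘ diskMobius (-w)
  have hg_maps : MapsTo g (ball 0 1) (ball 0 1) :=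
    (mapsTo_diskMobius hfw).comp (h_maps.comp (mapsTo_diskMobius h_neg))
  have hg : DifferentiableOn ℂ g (ball 0 1) :=
    (differentiableOn_diskMobius hfw).comp
      (hf.comp (differentiableOn_diskMobius h_neg) (mapsTo_diskMobius h_neg))
      (h_maps.comp (mapsTo_diskMobius h_neg))
  have hg_zero : g 0 = 0 := by simp [g, diskMobius]
  have h_schwarz := Complex.norm_le_norm_of_mapsTo_ball hg
    (hg_maps.mono_right ball_subset_closedBall) hg_zero (norm_diskMobius_lt_one hw' hz')
  simpa only [g, Function.comp_apply, diskMobius_neg_diskMobius hw' hz'] using h_schwarz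

theorem norm_sub_mul_norm_one_sub_conj_mul_le (hf : DifferentiableOn ℂ f (ball 0 1))
    (hb : ∀ z ∈ ball (0 : ℂ) 1, ‖f z‖ ≤ 1) (hw : w ∈ ball 0 1) (hz : z ∈ ball 0 1) :
    ‖f z - f w‖ * ‖1 - conj w * z‖ ≤ ‖z - w‖ * ‖1 - conj (f w) * f z‖ := by
  have h_shrink {t : ℝ} (ht : t ∈ Ioo 0 1) : ‖t * f z - t * f w‖ * ‖1 - conj w * z‖ ≤
      ‖z - w‖ * ‖1 - conj (t * f w) * (t * f z)‖ := by
    have h_maps : MapsTo (fun u => t * f u) (ball 0 1) (ball 0 1) := fun u hu => by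
      rw [mem_ball_zero_iff, norm_mul, Complex.norm_of_nonneg ht.1.le]
      exact mul_lt_one_of_nonneg_of_lt_one_left ht.1.le ht.2 (hb u hu)
    have h_pick := norm_diskMobius_le_of_mapsTo_ball (hf.const_mul (t : ℂ)) h_maps hw hz
    rwa [diskMobius, diskMobius, norm_div, norm_div, div_le_div_iff₀] at h_pick
    · exact norm_pos_iff.2 (one_sub_conj_mul_ne_zero_s19 (mem_ball_zero_iff.1 (h_maps hw))
        (mem_ball_zero_iff.1 (h_maps hz)))
    · exact norm_pos_iff.2 (one_sub_conj_mul_ne_zero_s19 (mem_ball_zero_iff.1 hw)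
        (mem_ball_zero_iff.1 hz))
  have h_mem : (1 : ℝ) ∈ closure (Ioo 0 1) := by simp [closure_Ioo zero_ne_one]
  simpa using le_on_closure (x := (1 : ℝ)) (s := Ioo 0 1) (fun t ht => h_shrink ht)
    (by fun_prop) (by fun_prop) h_mem

theorem norm_mul_one_add_le_norm_add (hf : DifferentiableOn ℂ f (ball 0 1))
    (hb : ∀ z ∈ ball (0 : ℂ) 1, ‖f z‖ ≤ 1) (hz : z ∈ ball 0 1) :
    ‖f z‖ * (1 + ‖f 0‖ * ‖z‖) ≤ ‖f 0‖ + ‖z‖ := by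
  have h0 : (0 : ℂ) ∈ ball 0 1 := mem_ball_self one_pos
  have hz2 : ‖z‖ ^ 2 ≤ 1 := pow_le_one₀ (norm_nonneg z) (mem_ball_zero_iff.1 hz).le
  have h_pick : ‖f z - f 0‖ ≤ ‖z‖ * ‖1 - conj (f 0) * f z‖ := by
    simpa using norm_sub_mul_norm_one_sub_conj_mul_le hf hb h0 hz
  have h_sq := pow_le_pow_left₀ (norm_nonneg _) h_pick 2
  rw [mul_pow, norm_sq_one_sub_conj_mul] at h_sq
  have h_norm_sub : (‖f z‖ - ‖f 0‖) ^ 2 ≤ ‖f z - f 0‖ ^ 2 := by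
    rw [sq_le_sq, abs_norm]
    exact abs_norm_sub_norm_le _ _
  have h_prod : ‖f 0‖ * ‖f z‖ ≤ 1 := mul_le_one₀ (hb 0 h0) (norm_nonneg _) (hb z hz)
  have h_real_sq : (‖f z‖ - ‖f 0‖) ^ 2 ≤ (‖z‖ * (1 - ‖f 0‖ * ‖f z‖)) ^ 2 := by
    linear_combination h_sq + (1 - ‖z‖ ^ 2) * h_norm_sub
  have h_real := abs_le_of_sq_le_sq h_real_sq (mul_nonneg (norm_nonneg z) (sub_nonneg.2 h_prod))
  linarith [le_abs_self (‖f z‖ - ‖f 0‖)]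

theorem norm_deriv_mul_one_sub_sq_le (hf : DifferentiableOn ℂ f (ball 0 1))
    (hb : ∀ z ∈ ball (0 : ℂ) 1, ‖f z‖ ≤ 1) (hz : z ∈ ball 0 1) :
    ‖deriv f z‖ * (1 - ‖z‖ ^ 2) ≤ 1 - ‖f z‖ ^ 2 := by
  have h_norm {v : ℂ} (hv : ‖v‖ ≤ 1) : ‖1 - conj v * v‖ = 1 - ‖v‖ ^ 2 := by
    have h_nonneg : 0 ≤ 1 - ‖v‖ ^ 2 := sub_nonneg.2 (pow_le_one₀ (norm_nonneg v) hv)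
    rw [Complex.conj_mul', ← Complex.norm_of_nonneg h_nonneg]
    norm_cast
  have hfz := (hf.differentiableAt (isOpen_ball.mem_nhds hz)).hasDerivAt
  have h_slope : ∀ᶠ v in 𝓝[≠] z, ‖slope f z v‖ * ‖1 - conj z * v‖ ≤ ‖1 - conj (f z) * f v‖ := by
    filter_upwards [nhdsWithin_le_nhds (isOpen_ball.mem_nhds hz), self_mem_nhdsWithin] with v hv hvz
    have hvz' : 0 < ‖v - z‖ := norm_pos_iff.2 (sub_ne_zero.2 hvz)
    rw [slope_def_field, norm_div, div_mul_eq_mul_div, div_le_iff₀' hvz']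
    exact norm_sub_mul_norm_one_sub_conj_mul_le hf hb hz hv
  have h_left := (hasDerivAt_iff_tendsto_slope.1 hfz).norm.mul
    ((Continuous.tendsto (by fun_prop : Continuous fun v => ‖1 - conj z * v‖) z).mono_left
      nhdsWithin_le_nhds)
  have h_right := ((hfz.continuousAt.tendsto.const_mul (conj (f z))).const_sub 1).norm.mono_left
      (nhdsWithin_le_nhds (s := {z}ᶜ))
  have h_le := le_of_tendsto_of_tendsto h_left h_right h_slope
  rwa [h_norm (mem_ball_zero_iff.1 hz).le, h_norm (hb z hz)] at h_le

end SchwarzPick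

section RealInequalities

variable {a d r x y : ℝ}

theorem two_mul_sq_add_three_mul_le_one (hr0 : 0 ≤ r) (hr : r ≤ (√17 - 3) / 4) :
    2 * r ^ 2 + 3 * r ≤ 1 := by
  have h_sq : (4 * r + 3) ^ 2 ≤ 17 := (Real.le_sqrt' (by linarith)).1 (by linarith)
  linarith

theorem one_sub_sq_add_div_one_add_mul (h : 1 + a * r ≠ 0) :
    1 - ((a + r) / (1 + a * r)) ^ 2 = (1 - a ^ 2) * (1 - r ^ 2) / (1 + a * r) ^ 2 := by
  field_simp
  ring

theorem add_div_one_add_mul_le_one (ha0 : 0 ≤ a) (ha1 : a ≤ 1) (hr0 : 0 ≤ r) (hr1 : r ≤ 1) :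
    (a + r) / (1 + a * r) ≤ 1 := by
  rw [div_le_one (by positivity)]
  linarith [mul_nonneg (sub_nonneg.2 ha1) (sub_nonneg.2 hr1)]

theorem add_one_sub_sq_mul_le_of_le (hr0 : 0 ≤ r) (hr : 2 * r < 1 - r ^ 2) (hxy : x ≤ y)
    (hy : y ≤ 1) :
    x + (1 - x ^ 2) / (1 - r ^ 2) * r ≤ y + (1 - y ^ 2) / (1 - r ^ 2) * r := by
  have h_pos : 0 < 1 - r ^ 2 := by linarith
  have h_factor : 0 ≤ (y - x) * (1 - r ^ 2 - (y + x) * r) / (1 - r ^ 2) := by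
    have h_mul : (y + x) * r ≤ 2 * r := by gcongr; linarith
    exact div_nonneg (mul_nonneg (by linarith) (by linarith)) h_pos.le
  calc x + (1 - x ^ 2) / (1 - r ^ 2) * r
      ≤ x + (1 - x ^ 2) / (1 - r ^ 2) * r
        + (y - x) * (1 - r ^ 2 - (y + x) * r) / (1 - r ^ 2) := le_add_of_nonneg_right h_factor
    _ = y + (1 - y ^ 2) / (1 - r ^ 2) * r := by field_simp; ring

theorem sq_add_one_sub_sq_mul_le_of_le (hr : r ≤ 1 - r ^ 2) (h_pos : 0 < 1 - r ^ 2) (hx : 0 ≤ x)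
    (hxy : x ≤ y) :
    x ^ 2 + (1 - x ^ 2) / (1 - r ^ 2) * r ≤ y ^ 2 + (1 - y ^ 2) / (1 - r ^ 2) * r := by
  have h_sq : x ^ 2 ≤ y ^ 2 := by gcongr
  have h_factor : 0 ≤ (y ^ 2 - x ^ 2) * (1 - r ^ 2 - r) / (1 - r ^ 2) :=
    div_nonneg (mul_nonneg (by linarith) (by linarith)) h_pos.le
  calc x ^ 2 + (1 - x ^ 2) / (1 - r ^ 2) * r
      ≤ x ^ 2 + (1 - x ^ 2) / (1 - r ^ 2) * r
        + (y ^ 2 - x ^ 2) * (1 - r ^ 2 - r) / (1 - r ^ 2) := le_add_of_nonneg_right h_factor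
    _ = y ^ 2 + (1 - y ^ 2) / (1 - r ^ 2) * r := by field_simp; ring

theorem extremal_add_tail_le_one (ha0 : 0 ≤ a) (ha1 : a ≤ 1) (hr0 : 0 ≤ r)
    (hr : 2 * r ^ 2 + 3 * r ≤ 1) :
    (a + r) / (1 + a * r) + (1 - ((a + r) / (1 + a * r)) ^ 2) / (1 - r ^ 2) * r
      + r ^ 2 / (1 - r) * (1 - a ^ 2) ≤ 1 := by
  have hr1 : 0 < 1 - r := by linarith [sq_nonneg r]
  have hr2 : 1 - r ^ 2 ≠ 0 := by nlinarith
  have har : 0 < 1 + a * r := by positivity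
  have h_poly :
      (1 + a) * (r * (1 - r) + r ^ 2 * (1 + a * r) ^ 2) ≤ (1 - r) ^ 2 * (1 + a * r) := by
    have h_sq : (1 + a * r) ^ 2 ≤ (1 + r) ^ 2 := by
      gcongr
      exact mul_le_of_le_one_left hr0 ha1
    have h_prod : (1 + a) * (r ^ 2 * (1 + a * r) ^ 2) ≤ 2 * (r ^ 2 * (1 + r) ^ 2) := by
      gcongr
      linarith
    -- The remaining inequality is affine in `a`; the next two facts settle `a = 1` and the slope.
    have h_one : 0 ≤ (1 - (2 * r ^ 2 + 3 * r)) * (r ^ 2 + 1) :=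
      mul_nonneg (sub_nonneg.2 hr) (by positivity)
    have h_slope : 0 ≤ (1 - a) * (r ^ 2 * (1 - r)) :=
      mul_nonneg (sub_nonneg.2 ha1) (by positivity)
    linarith
  have h_nonneg : 0 ≤ (1 - a) * ((1 - r) ^ 2 * (1 + a * r)
      - (1 + a) * (r * (1 - r) + r ^ 2 * (1 + a * r) ^ 2)) / ((1 - r) * (1 + a * r) ^ 2) :=
    div_nonneg (mul_nonneg (sub_nonneg.2 ha1) (sub_nonneg.2 h_poly)) (by positivity)
  rw [one_sub_sq_add_div_one_add_mul har.ne']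
  refine (le_add_of_nonneg_right h_nonneg).trans_eq ?_
  field_simp
  ring

theorem extremal_sq_add_tail_le_one (ha0 : 0 ≤ a) (ha1 : a ≤ 1) (hr0 : 0 ≤ r)
    (hr : 0 ≤ 1 - 2 * r - r ^ 2 - r ^ 3 - r ^ 4) :
    ((a + r) / (1 + a * r)) ^ 2 + (1 - ((a + r) / (1 + a * r)) ^ 2) / (1 - r ^ 2) * r
      + r ^ 2 / (1 - r) * (1 - a ^ 2) ≤ 1 := by
  have hr1 : 0 < 1 - r := by linarith [sq_nonneg r, pow_nonneg hr0 3, pow_nonneg hr0 4]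
  have hr2 : 1 - r ^ 2 ≠ 0 := by nlinarith
  have har : 0 < 1 + a * r := by positivity
  have h_poly : r ^ 2 * (1 + a * r) ^ 2 ≤ (1 - r ^ 2 - r) * (1 - r) := by
    calc r ^ 2 * (1 + a * r) ^ 2 ≤ r ^ 2 * (1 + r) ^ 2 := by
          gcongr
          exact mul_le_of_le_one_left hr0 ha1
      _ ≤ (1 - r ^ 2 - r) * (1 - r) := by linarith
  have h_nonneg : 0 ≤ (1 - a ^ 2) * ((1 - r ^ 2 - r) * (1 - r) - r ^ 2 * (1 + a * r) ^ 2)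
      / ((1 - r) * (1 + a * r) ^ 2) :=
    div_nonneg (mul_nonneg (sub_nonneg.2 (pow_le_one₀ ha0 ha1)) (sub_nonneg.2 h_poly))
      (by positivity)
  have h_sq : ((a + r) / (1 + a * r)) ^ 2 = 1 - (1 - a ^ 2) * (1 - r ^ 2) / (1 + a * r) ^ 2 := by
    rw [← one_sub_sq_add_div_one_add_mul har.ne']
    ring
  rw [h_sq, sub_sub_cancel]
  refine (le_add_of_nonneg_right h_nonneg).trans_eq ?_
  field_simp
  ring

theorem add_mul_add_tail_le_one (ha0 : 0 ≤ a) (ha1 : a ≤ 1) (hr0 : 0 ≤ r)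
    (hr : 2 * r ^ 2 + 3 * r ≤ 1) (hx : x * (1 + a * r) ≤ a + r)
    (hd : d * (1 - r ^ 2) ≤ 1 - x ^ 2) :
    x + d * r + r ^ 2 / (1 - r) * (1 - a ^ 2) ≤ 1 := by
  have hr_lt : 2 * r < 1 - r ^ 2 := by nlinarith
  have hd' : d ≤ (1 - x ^ 2) / (1 - r ^ 2) := (le_div_iff₀ (by linarith)).2 hd
  calc x + d * r + r ^ 2 / (1 - r) * (1 - a ^ 2)
      ≤ x + (1 - x ^ 2) / (1 - r ^ 2) * r + r ^ 2 / (1 - r) * (1 - a ^ 2) := by gcongr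
    _ ≤ (a + r) / (1 + a * r) + (1 - ((a + r) / (1 + a * r)) ^ 2) / (1 - r ^ 2) * r
        + r ^ 2 / (1 - r) * (1 - a ^ 2) := by
      gcongr ?_ + _
      exact add_one_sub_sq_mul_le_of_le hr0 hr_lt ((le_div_iff₀ (by positivity)).2 hx)
        (add_div_one_add_mul_le_one ha0 ha1 hr0 (by linarith [sq_nonneg r]))
    _ ≤ 1 := extremal_add_tail_le_one ha0 ha1 hr0 hr

theorem sq_add_mul_add_tail_le_one (ha0 : 0 ≤ a) (ha1 : a ≤ 1) (hr0 : 0 ≤ r)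
    (hr : 0 ≤ 1 - 2 * r - r ^ 2 - r ^ 3 - r ^ 4) (hx0 : 0 ≤ x) (hx : x * (1 + a * r) ≤ a + r)
    (hd : d * (1 - r ^ 2) ≤ 1 - x ^ 2) :
    x ^ 2 + d * r + r ^ 2 / (1 - r) * (1 - a ^ 2) ≤ 1 := by
  have hr1 : r < 1 := by linarith [sq_nonneg r, pow_nonneg hr0 3, pow_nonneg hr0 4]
  have hr_pos : 0 < 1 - r ^ 2 := sub_pos.2 (pow_lt_one₀ hr0 hr1 two_ne_zero)
  have hd' : d ≤ (1 - x ^ 2) / (1 - r ^ 2) := (le_div_iff₀ hr_pos).2 hd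
  calc x ^ 2 + d * r + r ^ 2 / (1 - r) * (1 - a ^ 2)
      ≤ x ^ 2 + (1 - x ^ 2) / (1 - r ^ 2) * r + r ^ 2 / (1 - r) * (1 - a ^ 2) := by gcongr
    _ ≤ ((a + r) / (1 + a * r)) ^ 2 + (1 - ((a + r) / (1 + a * r)) ^ 2) / (1 - r ^ 2) * r
        + r ^ 2 / (1 - r) * (1 - a ^ 2) := by
      gcongr ?_ + _
      exact sq_add_one_sub_sq_mul_le_of_le (by linarith [pow_nonneg hr0 3, pow_nonneg hr0 4])
        hr_pos hx0 ((le_div_iff₀ (by positivity)).2 hx)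
    _ ≤ 1 := extremal_sq_add_tail_le_one ha0 ha1 hr0 hr

end RealInequalities

/-- Theorem 7: for a bounded analytic self-map `f` of the unit disk with
coefficients `a n`: for every `z` with `|z| = r ≤ (√17 - 3)/4`,
`|f(z)| + |f'(z)| r + ∑_{n=2}^∞ |aₙ| rⁿ
  + (1/(1+|a₀|) + r/(1-r)) ∑_{n=1}^∞ |aₙ|² r^{2n} ≤ 1`;
and for every `z` whose modulus `r` satisfies `1 - 2r - r² - r³ - r⁴ ≥ 0`,
`|f(z)|² + |f'(z)| r + ∑_{n=2}^∞ |aₙ| rⁿ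
  + (1/(1+|a₀|) + r/(1-r)) ∑_{n=1}^∞ |aₙ|² r^{2n} ≤ 1`. -/
theorem stmt19 (f : ℂ → ℂ) (a : ℕ → ℂ)
    (hf : DifferentiableOn ℂ f (Metric.ball 0 1))
    (hb : ∀ z ∈ Metric.ball (0 : ℂ) 1, ‖f z‖ ≤ 1)
    (hs : ∀ z ∈ Metric.ball (0 : ℂ) 1, HasSum (fun n => a n * z ^ n) (f z)) :
    (∀ z : ℂ, z ∈ Metric.ball (0 : ℂ) 1 → ‖z‖ ≤ (Real.sqrt 17 - 3) / 4 →
      ‖f z‖ + ‖deriv f z‖ * ‖z‖ + (∑' n : ℕ, ‖a (n + 2)‖ * ‖z‖ ^ (n + 2))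
        + (1 / (1 + ‖a 0‖) + ‖z‖ / (1 - ‖z‖))
          * (∑' n : ℕ, ‖a (n + 1)‖ ^ 2 * ‖z‖ ^ (2 * (n + 1)))
        ≤ 1) ∧
    (∀ z : ℂ, z ∈ Metric.ball (0 : ℂ) 1 →
      0 ≤ 1 - 2 * ‖z‖ - ‖z‖ ^ 2 - ‖z‖ ^ 3 - ‖z‖ ^ 4 →
      ‖f z‖ ^ 2 + ‖deriv f z‖ * ‖z‖ + (∑' n : ℕ, ‖a (n + 2)‖ * ‖z‖ ^ (n + 2))
        + (1 / (1 + ‖a 0‖) + ‖z‖ / (1 - ‖z‖))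
          * (∑' n : ℕ, ‖a (n + 1)‖ ^ 2 * ‖z‖ ^ (2 * (n + 1)))
        ≤ 1) := by
  have h_coeff : ‖a 0‖ = ‖f 0‖ := congrArg norm (coeff_zero_eq hs)
  have ha : ‖a 0‖ ≤ 1 := h_coeff ▸ hb 0 (Metric.mem_ball_self one_pos)
  have h_value {z : ℂ} (hz : z ∈ Metric.ball (0 : ℂ) 1) :
      ‖f z‖ * (1 + ‖a 0‖ * ‖z‖) ≤ ‖a 0‖ + ‖z‖ :=
    h_coeff ▸ norm_mul_one_add_le_norm_add hf hb hz
  refine ⟨fun z hz hr => ?_, fun z hz hr => ?_⟩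
  · linarith [tsum_norm_coeff_majorant_le hb hs hz,
      add_mul_add_tail_le_one (norm_nonneg (a 0)) ha (norm_nonneg z)
        (two_mul_sq_add_three_mul_le_one (norm_nonneg z) hr) (h_value hz)
        (norm_deriv_mul_one_sub_sq_le hf hb hz)]
  · linarith [tsum_norm_coeff_majorant_le hb hs hz,
      sq_add_mul_add_tail_le_one (norm_nonneg (a 0)) ha (norm_nonneg z) hr (norm_nonneg (f z))
        (h_value hz) (norm_deriv_mul_one_sub_sq_le hf hb hz)]
end
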